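/- arXiv:2307.01562 — 7 statements merged into one kernel-verified Lean document; each statement's English description precedes it below -/
import Mathlib

section
/- Let T be a measure-preserving automorphism of a probability space (X, μ), let (k_j) be a strictly increasing sequence of natural numbers such that the Koopman powers U_T^{k_j} converge weakly to a bounded operator V on L²(μ). Let S be a mixing measure-preserving automorphism of a probability space (Y, ν) and let η be a joining of (X, μ, T) and (Y, ν, S). Then for every n ≥ 1, all bounded measurable f₁, …, fₙ : X → ℝ and every bounded measurable g : Y → ℝ one has ∫_{X×Y} (∏_{i=1}^n (V f_i)(x)) g(y) dη(x,y) = (∫_X ∏_{i=1}^n (V f_i) dμ) · (∫_Y g dν). -/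
open MeasureTheory Filter Topology

/-- A measure-preserving transformation `S` of `(Y, ν)` is mixing if
`ν (A ∩ S^{-n} B) → ν A * ν B` for all measurable sets `A`, `B`. -/
def MeasureMixing {Y : Type*} [MeasurableSpace Y] (S : Y → Y) (ν : Measure Y) : Prop :=
  ∀ A B : Set Y, MeasurableSet A → MeasurableSet B →
    Tendsto (fun n => ν (A ∩ S^[n] ⁻¹' B)) atTop (𝓝 (ν A * ν B))

namespace JoinAux

/-- Average over a finite set. -/
noncomputable def avg (I : Finset ℕ) (u : ℕ → ℝ) : ℝ := (I.card : ℝ)⁻¹ * ∑ i ∈ I, u i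

lemma avg_mono {I : Finset ℕ} {u v : ℕ → ℝ} (h : ∀ i ∈ I, u i ≤ v i) : avg I u ≤ avg I v :=
  mul_le_mul_of_nonneg_left (Finset.sum_le_sum h) (by positivity)

lemma avg_congr {I : Finset ℕ} {u v : ℕ → ℝ} (h : ∀ i ∈ I, u i = v i) : avg I u = avg I v := by
  unfold avg; rw [Finset.sum_congr rfl h]

lemma avg_comm (I J : Finset ℕ) (u : ℕ → ℕ → ℝ) :
    avg I (fun i => avg J (fun j => u i j)) = avg J (fun j => avg I (fun i => u i j)) := by
  unfold avg
  simp_rw [Finset.mul_sum]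
  rw [Finset.sum_comm]
  refine Finset.sum_congr rfl fun j _ => Finset.sum_congr rfl fun i _ => by ring

lemma avg_const {I : Finset ℕ} (hI : I.Nonempty) (c : ℝ) : avg I (fun _ => c) = c := by
  have : (I.card : ℝ) ≠ 0 := by exact_mod_cast hI.card_pos.ne'
  simp [avg, this]

lemma avg_add (I : Finset ℕ) (u v : ℕ → ℝ) : avg I (fun i => u i + v i) = avg I u + avg I v := by
  simp [avg, Finset.sum_add_distrib, mul_add]

lemma avg_sub (I : Finset ℕ) (u v : ℕ → ℝ) : avg I (fun i => u i - v i) = avg I u - avg I v := by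
  simp [avg, Finset.sum_sub_distrib, mul_sub]

lemma avg_nonneg {I : Finset ℕ} {u : ℕ → ℝ} (h : ∀ i ∈ I, 0 ≤ u i) : 0 ≤ avg I u :=
  mul_nonneg (by positivity) (Finset.sum_nonneg h)

lemma avg_mul_left (I : Finset ℕ) (u : ℕ → ℝ) (c : ℝ) : avg I (fun i => c * u i) = c * avg I u := by
  simp only [avg, ← Finset.mul_sum]; ring

lemma avg_mul_right (I : Finset ℕ) (u : ℕ → ℝ) (c : ℝ) :
    avg I (fun i => u i * c) = avg I u * c := by
  simp only [avg, ← Finset.sum_mul]; ring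

lemma abs_avg_le (I : Finset ℕ) (u : ℕ → ℝ) : |avg I u| ≤ avg I (fun i => |u i|) := by
  unfold avg
  rw [abs_mul, abs_of_nonneg (by positivity : (0:ℝ) ≤ (I.card : ℝ)⁻¹)]
  exact mul_le_mul_of_nonneg_left (Finset.abs_sum_le_sum_abs _ _) (by positivity)

lemma avg_sq_le (I : Finset ℕ) (u : ℕ → ℝ) : avg I u ^ 2 ≤ avg I (fun i => u i ^ 2) := by
  rcases I.eq_empty_or_nonempty with rfl | hI
  · simp [avg]
  have h0 : (0:ℝ) < I.card := by exact_mod_cast hI.card_pos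
  have := sq_sum_le_card_mul_sum_sq (s := I) (f := u)
  unfold avg
  rw [mul_pow, inv_pow, sq (I.card : ℝ), mul_inv, mul_assoc]
  refine mul_le_mul_of_nonneg_left ?_ (by positivity)
  rw [inv_mul_le_iff₀ h0]
  exact this

/-- Measurable and bounded by one. -/
def BM {Z : Type*} [MeasurableSpace Z] (w : Z → ℝ) : Prop := Measurable w ∧ ∀ z, |w z| ≤ 1

section BM
variable {Z W : Type*} [MeasurableSpace Z] [MeasurableSpace W]

lemma BM.mul {u v : Z → ℝ} (hu : BM u) (hv : BM v) : BM (fun z => u z * v z) := by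
  refine ⟨hu.1.mul hv.1, fun z => ?_⟩
  rw [abs_mul]
  exact mul_le_one₀ (hu.2 z) (abs_nonneg _) (hv.2 z)

lemma BM.comp {u : Z → ℝ} (hu : BM u) {m : W → Z} (hm : Measurable m) : BM (fun z => u (m z)) :=
  ⟨hu.1.comp hm, fun _ => hu.2 _⟩

lemma BM.integrable {u : Z → ℝ} (hu : BM u) (m : Measure Z) [IsProbabilityMeasure m] :
    Integrable u m :=
  Integrable.of_bound hu.1.aestronglyMeasurable 1 (Eventually.of_forall fun z => hu.2 z)

lemma BM.abs_integral_le {u : Z → ℝ} (hu : BM u) (m : Measure Z) [IsProbabilityMeasure m] :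
    |∫ z, u z ∂m| ≤ 1 := by
  have := norm_integral_le_of_norm_le_const (μ := m) (f := u) (C := 1)
    (Eventually.of_forall fun z => hu.2 z)
  simpa using this

lemma sq_integral_le {u : Z → ℝ} (m : Measure Z) [IsProbabilityMeasure m]
    (hu : Integrable u m) (hu2 : Integrable (fun z => u z ^ 2) m) :
    (∫ z, u z ∂m) ^ 2 ≤ ∫ z, u z ^ 2 ∂m := by
  set c := ∫ z, u z ∂m with hc
  have h : 0 ≤ ∫ z, (u z - c) ^ 2 ∂m := integral_nonneg fun z => sq_nonneg _
  have h2 : ∫ z, (u z - c) ^ 2 ∂m = ∫ z, (u z ^ 2 - (2 * c) * u z + c ^ 2) ∂m := by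
    congr 1; ext z; ring
  have hi : Integrable (fun z => u z ^ 2 - (2 * c) * u z) m := hu2.sub (hu.const_mul _)
  rw [h2, integral_add hi (integrable_const _),
    integral_sub hu2 (hu.const_mul _), integral_const_mul] at h
  simp only [integral_const, probReal_univ, one_smul] at h
  rw [← hc] at h
  nlinarith

lemma integral_avg (m : Measure Z) (I : Finset ℕ) (h : ℕ → Z → ℝ)
    (hh : ∀ i, Integrable (h i) m) :
    ∫ z, avg I (fun i => h i z) ∂m = avg I (fun i => ∫ z, h i z ∂m) := by
  unfold avg
  rw [integral_const_mul, integral_finsetSum _ (fun i _ => hh i)]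

end BM

section main
variable {X Y : Type*} [MeasurableSpace X] [MeasurableSpace Y]

/-- Iterated averages of integrals. -/
noncomputable def DD (T : X → X) (η : Measure (X × Y)) :
    List (Finset ℕ × (X → ℝ)) → (X × Y → ℝ) → ℝ
  | [], w => ∫ p, w p ∂η
  | q :: L, w => avg q.1 (fun i => DD T η L (fun p => q.2 (T^[i] p.1) * w p))

/-- Box-type norm. -/
noncomputable def NN (S : Y → Y) (ν : Measure Y) : List (Finset ℕ) → (Y → ℝ) → ℝ
  | [], g => |∫ y, g y ∂ν|
  | I :: L, g => Real.sqrt (avg I (fun s => avg I (fun t =>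
      NN S ν L (fun y => g (S^[I.sup id - s] y) * g (S^[I.sup id - t] y)))))

/-- The list of functions after one Cauchy-Schwarz step. -/
def LL (T : X → X) (a b : ℕ) (L : List (Finset ℕ × (X → ℝ))) : List (Finset ℕ × (X → ℝ)) :=
  L.map (fun q => (q.1, fun x => q.2 (T^[a] x) * q.2 (T^[b] x)))

/-- All functions in the list are measurable and bounded by one. -/
def BL (L : List (Finset ℕ × (X → ℝ))) : Prop := ∀ q ∈ L, BM q.2

lemma BL.LL {T : X → X} (hT : Measurable T) {L : List (Finset ℕ × (X → ℝ))} (hL : BL L)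
    (a b : ℕ) : BL (LL T a b L) := by
  intro q hq
  simp only [JoinAux.LL, List.mem_map] at hq
  obtain ⟨r, hr, rfl⟩ := hq
  exact ((hL r hr).comp (hT.iterate a)).mul ((hL r hr).comp (hT.iterate b))

lemma cs_base {T : X → X} {S : Y → Y} {η : Measure (X × Y)} [IsProbabilityMeasure η]
    (hT : Measurable T) (hS : Measurable S) (hη : MeasurePreserving (Prod.map T S) η η)
    (I : Finset ℕ) {f : X → ℝ} (hf : BM f) {w : X × Y → ℝ} (hw : BM w) :
    (avg I (fun s => ∫ p, f (T^[s] p.1) * w p ∂η)) ^ 2 ≤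
    avg I (fun s => avg I (fun t => ∫ p, w (T^[I.sup id - s] p.1, S^[I.sup id - s] p.2) *
      w (T^[I.sup id - t] p.1, S^[I.sup id - t] p.2) ∂η)) := by
  set K := I.sup id with hK
  have hm : ∀ a : ℕ, Measurable (fun p : X × Y => (T^[a] p.1, S^[a] p.2)) := fun a =>
    ((hT.iterate a).comp measurable_fst).prodMk ((hS.iterate a).comp measurable_snd)
  have hmp : ∀ a : ℕ, MeasurePreserving (fun p : X × Y => (T^[a] p.1, S^[a] p.2)) η η := by
    intro a
    have := hη.iterate a
    rwa [Prod.map_iterate] at this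
  have hwa : ∀ a : ℕ, BM (fun p : X × Y => w (T^[a] p.1, S^[a] p.2)) := fun a => hw.comp (hm a)
  have hfK : BM (fun p : X × Y => f (T^[K] p.1)) :=
    hf.comp ((hT.iterate K).comp measurable_fst)
  have h1 : ∀ s ∈ I, ∫ p, f (T^[s] p.1) * w p ∂η =
      ∫ p, f (T^[K] p.1) * w (T^[K - s] p.1, S^[K - s] p.2) ∂η := by
    intro s hs
    have hsK : s ≤ K := Finset.le_sup (f := id) hs
    have hb : BM (fun p : X × Y => f (T^[s] p.1) * w p) :=
      (hf.comp ((hT.iterate s).comp measurable_fst)).mul hw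
    have h := integral_map (μ := η) (hm (K - s)).aemeasurable
      (f := fun p : X × Y => f (T^[s] p.1) * w p) hb.1.aestronglyMeasurable
    rw [(hmp (K - s)).map_eq] at h
    rw [h]
    congr 1; ext p
    rw [← Function.iterate_add_apply, Nat.add_sub_cancel' hsK]
  rw [avg_congr h1, ← integral_avg η I _ (fun i => (hfK.mul (hwa _)).integrable η)]
  simp_rw [avg_mul_left]
  have hWm : BM (fun p : X × Y => avg I (fun s => w (T^[K - s] p.1, S^[K - s] p.2))) := by
    constructor
    · unfold avg
      exact (Finset.measurable_sum I (fun i _ => (hwa (K - i)).1)).const_mul _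
    · intro p
      rcases I.eq_empty_or_nonempty with h | h
      · simp [avg, h]
      refine (abs_avg_le _ _).trans ?_
      calc _ ≤ avg I (fun _ => 1) := avg_mono fun i _ => hw.2 _
        _ = 1 := avg_const h 1
  have hfW := hfK.mul hWm
  have hsq : ∀ {u : X × Y → ℝ}, BM u → Integrable (fun z => u z ^ 2) η := by
    intro u hu
    simpa [sq] using (hu.mul hu).integrable η
  refine (sq_integral_le η (hfW.integrable η) (hsq hfW)).trans ?_
  calc _ ≤ ∫ p, (avg I (fun s => w (T^[K - s] p.1, S^[K - s] p.2))) ^ 2 ∂η := by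
        refine integral_mono (hsq hfW) (hsq hWm) fun p => ?_
        simp only [mul_pow]
        have : f (T^[K] p.1) ^ 2 ≤ 1 := (sq_le_one_iff_abs_le_one _).2 (hf.2 _)
        exact mul_le_of_le_one_left (sq_nonneg _) this
    _ = _ := by
        have : ∀ s, avg I (fun t => ∫ p, w (T^[K - s] p.1, S^[K - s] p.2) *
            w (T^[K - t] p.1, S^[K - t] p.2) ∂η) =
            ∫ p, w (T^[K - s] p.1, S^[K - s] p.2) *
              avg I (fun t => w (T^[K - t] p.1, S^[K - t] p.2)) ∂η := by
          intro s
          rw [← integral_avg η I _ (fun i => ((hwa _).mul (hwa _)).integrable η)]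
          simp_rw [avg_mul_left]
        simp_rw [this]
        rw [← integral_avg η I _ (fun i => ((hwa _).mul hWm).integrable η)]
        simp_rw [avg_mul_right, sq]

lemma cs_step {T : X → X} {S : Y → Y} {η : Measure (X × Y)} [IsProbabilityMeasure η]
    (hT : Measurable T) (hS : Measurable S) (hη : MeasurePreserving (Prod.map T S) η η)
    (I : Finset ℕ) {f : X → ℝ} (hf : BM f) (L : List (Finset ℕ × (X → ℝ))) (hL : BL L)
    (w : X × Y → ℝ) (hw : BM w) :
    (avg I (fun s => DD T η L (fun p => f (T^[s] p.1) * w p))) ^ 2 ≤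
    avg I (fun s => avg I (fun t => DD T η (LL T (I.sup id - s) (I.sup id - t) L)
      (fun p => w (T^[I.sup id - s] p.1, S^[I.sup id - s] p.2) *
        w (T^[I.sup id - t] p.1, S^[I.sup id - t] p.2)))) := by
  induction L generalizing w with
  | nil => exact cs_base hT hS hη I hf hw
  | cons q L ih =>
    have hq : BM q.2 := hL q (by simp)
    have hL' : BL L := fun r hr => hL r (by simp [hr])
    simp only [DD, LL, List.map_cons]
    rw [avg_comm]
    refine (avg_sq_le _ _).trans ?_
    have key : ∀ j ∈ q.1, _ := fun j _ => ih hL' (fun p => q.2 (T^[j] p.1) * w p)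
      ((hq.comp ((hT.iterate j).comp measurable_fst)).mul hw)
    have e1 : ∀ j i, (fun p : X × Y => q.2 (T^[j] p.1) * (f (T^[i] p.1) * w p)) =
      (fun p : X × Y => f (T^[i] p.1) * (q.2 (T^[j] p.1) * w p)) := by
      intro j i; ext p; ring
    simp_rw [e1]
    refine (avg_mono key).trans (le_of_eq ?_)
    rw [avg_comm]
    refine avg_congr fun s _ => ?_
    rw [avg_comm]
    refine avg_congr fun t _ => avg_congr fun j _ => ?_
    unfold LL
    congr 1
    ext p
    simp only [← Function.iterate_add_apply]
    simp only [add_comm j]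
    ring

lemma NN_nonneg (S : Y → Y) (ν : Measure Y) (L : List (Finset ℕ)) (g : Y → ℝ) :
    0 ≤ NN S ν L g := by
  cases L with
  | nil => exact abs_nonneg _
  | cons I L => exact Real.sqrt_nonneg _

lemma NN_le_one {S : Y → Y} {ν : Measure Y} [IsProbabilityMeasure ν] (hS : Measurable S)
    (L : List (Finset ℕ)) (g : Y → ℝ) (hg : BM g) : NN S ν L g ≤ 1 := by
  induction L generalizing g with
  | nil => exact hg.abs_integral_le ν
  | cons I L ih =>
    unfold NN
    refine Real.sqrt_le_iff.2 ⟨zero_le_one, ?_⟩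
    rw [one_pow]
    rcases I.eq_empty_or_nonempty with h | h
    · simp [avg, h]
    calc _ ≤ avg I (fun _ => avg I (fun _ => 1)) := avg_mono fun s _ => avg_mono fun t _ =>
            ih _ ((hg.comp (hS.iterate _)).mul (hg.comp (hS.iterate _)))
      _ = 1 := by rw [avg_const h, avg_const h]

lemma DD_le_NN {T : X → X} {S : Y → Y} {η : Measure (X × Y)} [IsProbabilityMeasure η]
    {ν : Measure Y}
    (hT : Measurable T) (hS : Measurable S) (hη : MeasurePreserving (Prod.map T S) η η)
    (hη2 : η.map Prod.snd = ν) (Is : List (Finset ℕ)) :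
    ∀ (L : List (Finset ℕ × (X → ℝ))), BL L → L.map Prod.fst = Is →
    ∀ g : Y → ℝ, BM g → |DD T η L (fun p => g p.2)| ≤ NN S ν Is g := by
  induction Is with
  | nil =>
    intro L _ h g hg
    have : L = [] := by simpa using h
    subst this
    unfold DD NN
    rw [← hη2, integral_map measurable_snd.aemeasurable hg.1.aestronglyMeasurable]
  | cons I Is ih =>
    intro L hL h g hg
    cases L with
    | nil => simp at h
    | cons q L =>
      simp only [List.map_cons, List.cons.injEq] at h
      obtain ⟨rfl, h⟩ := h
      have hq : BM q.2 := hL q (by simp)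
      have hL' : BL L := fun r hr => hL r (by simp [hr])
      unfold DD NN
      refine Real.abs_le_sqrt ?_
      refine (cs_step hT hS hη q.1 hq L hL' (fun p => g p.2) (hg.comp measurable_snd)).trans ?_
      refine avg_mono fun s _ => avg_mono fun t _ => (le_abs_self _).trans ?_
      refine ih _ (hL'.LL hT _ _) ?_ _ ((hg.comp (hS.iterate _)).mul (hg.comp (hS.iterate _)))
      rw [← h]
      simp [LL, Function.comp_def]

lemma mixing_simple {S : Y → Y} {ν : Measure Y} [IsProbabilityMeasure ν]
    (hS : Measurable S) (hmix : MeasureMixing S ν) (s : Finset ℤ) (c : ℤ → ℝ) (A : ℤ → Set Y)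
    (hA : ∀ m, MeasurableSet (A m)) :
    Tendsto (fun n => ∫ y, (∑ m ∈ s, c m * (A m).indicator 1 y) *
      (∑ m ∈ s, c m * (A m).indicator 1 (S^[n] y)) ∂ν) atTop
      (𝓝 ((∫ y, (∑ m ∈ s, c m * (A m).indicator 1 y) ∂ν) ^ 2)) := by
  have hindi : ∀ B : Set Y, MeasurableSet B → Integrable (B.indicator (1 : Y → ℝ)) ν :=
    fun B hB => (integrable_const (1:ℝ)).indicator hB
  have e2 : ∫ y, (∑ m ∈ s, c m * (A m).indicator 1 y) ∂ν = ∑ m ∈ s, c m * ν.real (A m) := by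
    rw [integral_finsetSum _ (fun m _ => (hindi _ (hA m)).const_mul _)]
    refine Finset.sum_congr rfl fun m _ => ?_
    rw [integral_const_mul, integral_indicator_one (hA m)]
  have e1 : ∀ n, ∫ y, (∑ m ∈ s, c m * (A m).indicator 1 y) *
      (∑ m ∈ s, c m * (A m).indicator 1 (S^[n] y)) ∂ν =
      ∑ m ∈ s, ∑ l ∈ s, c m * c l * ν.real (A m ∩ S^[n] ⁻¹' (A l)) := by
    intro n
    have hB : ∀ m l, MeasurableSet (A m ∩ S^[n] ⁻¹' (A l)) := fun m l =>
      (hA m).inter ((hS.iterate n) (hA l))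
    have : ∀ y, (∑ m ∈ s, c m * (A m).indicator (1 : Y → ℝ) y) *
      (∑ m ∈ s, c m * (A m).indicator (1 : Y → ℝ) (S^[n] y)) =
      ∑ m ∈ s, ∑ l ∈ s, c m * c l * (A m ∩ S^[n] ⁻¹' (A l)).indicator 1 y := by
      intro y
      rw [Finset.sum_mul_sum]
      refine Finset.sum_congr rfl fun m _ => Finset.sum_congr rfl fun l _ => ?_
      by_cases h1 : y ∈ A m <;> by_cases h2 : S^[n] y ∈ A l <;> simp [Set.indicator, h1, h2]
    simp_rw [this]
    rw [integral_finsetSum _ (fun m _ => integrable_finsetSum _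
      (fun l _ => (hindi _ (hB m l)).const_mul _))]
    refine Finset.sum_congr rfl fun m _ => ?_
    rw [integral_finsetSum _ (fun l _ => (hindi _ (hB m l)).const_mul _)]
    refine Finset.sum_congr rfl fun l _ => ?_
    rw [integral_const_mul, integral_indicator_one (hB m l)]
  simp_rw [e1]
  rw [e2, sq, Finset.sum_mul_sum]
  refine tendsto_finsetSum _ fun m _ => tendsto_finsetSum _ fun l _ => ?_
  have h := hmix (A m) (A l) (hA m) (hA l)
  have h' := (ENNReal.tendsto_toReal (ENNReal.mul_ne_top (measure_ne_top ν (A m))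
    (measure_ne_top ν (A l)))).comp h
  rw [ENNReal.toReal_mul] at h'
  have h3 := h'.const_mul (c m * c l)
  refine (h3.congr fun n => rfl).trans (le_of_eq ?_)
  congr 1
  simp only [Measure.real]
  ring

lemma mixing_fn {S : Y → Y} {ν : Measure Y} [IsProbabilityMeasure ν]
    (hS : Measurable S) (hmix : MeasureMixing S ν) {g : Y → ℝ} (hg : BM g) :
    Tendsto (fun n => ∫ y, g y * g (S^[n] y) ∂ν) atTop (𝓝 ((∫ y, g y ∂ν) ^ 2)) := by
  rw [Metric.tendsto_atTop]
  intro ε hε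
  obtain ⟨M, hM⟩ := exists_nat_gt (8 / ε)
  have hM0 : (0:ℝ) < M := lt_trans (by positivity) hM
  have hMe : 8 / (M:ℝ) < ε := by
    rw [div_lt_iff₀ hM0]; rw [div_lt_iff₀ hε] at hM; linarith
  set h : Y → ℝ := fun y => (⌊(M:ℝ) * g y⌋ : ℝ) / M with hh
  have hfl : ∀ y, -(M:ℤ) ≤ ⌊(M:ℝ) * g y⌋ ∧ ⌊(M:ℝ) * g y⌋ ≤ M := by
    intro y
    have := abs_le.1 (hg.2 y)
    constructor
    · rw [Int.le_floor]; push_cast; nlinarith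
    · have h1 : (⌊(M:ℝ) * g y⌋ : ℝ) ≤ M := (Int.floor_le _).trans (by nlinarith)
      exact_mod_cast h1
  have hmeas : Measurable (fun y => ⌊(M:ℝ) * g y⌋) := Int.measurable_floor.comp (hg.1.const_mul _)
  have hhB : BM h := by
    constructor
    · exact ((measurable_from_top (f := fun m : ℤ => (m:ℝ))).comp hmeas).div_const _
    · intro y
      rw [hh]
      simp only
      rw [abs_div, abs_of_pos hM0, div_le_one hM0, abs_le]
      obtain ⟨h1, h2⟩ := hfl y
      exact ⟨by exact_mod_cast h1, by exact_mod_cast h2⟩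
  have hgh : ∀ y, |g y - h y| ≤ 1 / M := by
    intro y
    have e : g y - h y = (M * g y - ⌊(M:ℝ) * g y⌋) / M := by rw [hh]; field_simp
    rw [e, abs_div, abs_of_pos hM0]
    refine div_le_div_of_nonneg_right ?_ hM0.le
    rw [abs_le]
    have h1 := Int.floor_le ((M:ℝ) * g y)
    have h2 := Int.lt_floor_add_one ((M:ℝ) * g y)
    constructor <;> linarith
  have hsum : ∀ y, h y = ∑ m ∈ Finset.Icc (-(M:ℤ)) M,
      ((m:ℝ) / M) * ({y | ⌊(M:ℝ) * g y⌋ = m} : Set Y).indicator 1 y := by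
    intro y
    rw [Finset.sum_eq_single ⌊(M:ℝ) * g y⌋]
    · simp [hh]
    · intro b _ hb
      have : y ∉ ({y | ⌊(M:ℝ) * g y⌋ = b} : Set Y) := fun hy => hb hy.symm
      simp [this]
    · intro hn
      exact absurd (Finset.mem_Icc.2 (hfl y)) hn
  have hlim := mixing_simple hS hmix (Finset.Icc (-(M:ℤ)) M) (fun m => (m:ℝ) / M)
    (fun m => {y | ⌊(M:ℝ) * g y⌋ = m}) (fun m => hmeas (measurableSet_singleton m))
  simp_rw [← hsum] at hlim
  obtain ⟨N, hN⟩ := (Metric.tendsto_atTop.1 hlim) (ε / 2) (by positivity)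
  refine ⟨N, fun n hn => ?_⟩
  have h1 := hN n hn
  rw [Real.dist_eq] at h1 ⊢
  have hgn : BM (fun y => g (S^[n] y)) := hg.comp (hS.iterate n)
  have hhn : BM (fun y => h (S^[n] y)) := hhB.comp (hS.iterate n)
  have d1 : |∫ y, g y * g (S^[n] y) ∂ν - ∫ y, h y * h (S^[n] y) ∂ν| ≤ 2 / M := by
    rw [← integral_sub ((hg.mul hgn).integrable ν) ((hhB.mul hhn).integrable ν)]
    have := norm_integral_le_of_norm_le_const (μ := ν)
      (f := fun y => g y * g (S^[n] y) - h y * h (S^[n] y)) (C := 2 / M)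
      (Eventually.of_forall fun y => by
        have e : g y * g (S^[n] y) - h y * h (S^[n] y) =
          g y * (g (S^[n] y) - h (S^[n] y)) + (g y - h y) * h (S^[n] y) := by ring
        rw [e, Real.norm_eq_abs]
        refine (abs_add_le _ _).trans ?_
        rw [abs_mul, abs_mul]
        have a1 := mul_le_mul (hg.2 y) (hgh (S^[n] y)) (abs_nonneg _) zero_le_one
        have a2 := mul_le_mul (hgh y) (hhB.2 (S^[n] y)) (abs_nonneg _) (by positivity)
        calc _ ≤ 1 * (1 / (M:ℝ)) + 1 / M * 1 := add_le_add a1 a2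
          _ = 2 / M := by ring)
    simpa using this
  have d2 : |∫ y, g y ∂ν - ∫ y, h y ∂ν| ≤ 1 / M := by
    rw [← integral_sub (hg.integrable ν) (hhB.integrable ν)]
    have := norm_integral_le_of_norm_le_const (μ := ν)
      (f := fun y => g y - h y) (C := 1 / M) (Eventually.of_forall fun y => hgh y)
    simpa using this
  have d3 : |(∫ y, h y ∂ν) ^ 2 - (∫ y, g y ∂ν) ^ 2| ≤ 2 / M := by
    have e : (∫ y, h y ∂ν) ^ 2 - (∫ y, g y ∂ν) ^ 2 =
      (∫ y, g y ∂ν - ∫ y, h y ∂ν) * (-(∫ y, g y ∂ν + ∫ y, h y ∂ν)) := by ring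
    rw [e, abs_mul, abs_neg]
    have b : |∫ y, g y ∂ν + ∫ y, h y ∂ν| ≤ 2 := (abs_add_le _ _).trans (by
      have := hg.abs_integral_le ν
      have := hhB.abs_integral_le ν
      linarith)
    calc _ ≤ 1 / (M:ℝ) * 2 := mul_le_mul d2 b (abs_nonneg _) (by positivity)
      _ = 2 / M := by ring
  have tri := abs_add_three (∫ y, g y * g (S^[n] y) ∂ν - ∫ y, h y * h (S^[n] y) ∂ν)
    (∫ y, h y * h (S^[n] y) ∂ν - (∫ y, h y ∂ν) ^ 2) ((∫ y, h y ∂ν) ^ 2 - (∫ y, g y ∂ν) ^ 2)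
  have e : (∫ y, g y * g (S^[n] y) ∂ν - ∫ y, h y * h (S^[n] y) ∂ν) +
    (∫ y, h y * h (S^[n] y) ∂ν - (∫ y, h y ∂ν) ^ 2) + ((∫ y, h y ∂ν) ^ 2 - (∫ y, g y ∂ν) ^ 2)
    = ∫ y, g y * g (S^[n] y) ∂ν - (∫ y, g y ∂ν) ^ 2 := by ring
  rw [e] at tri
  have : 2 / (M:ℝ) + 2 / M < ε / 2 := by
    have : 2 / (M:ℝ) + 2 / M = (8 / M) / 2 := by ring
    linarith
  linarith

lemma avg_add_const_le (I : Finset ℕ) (u : ℕ → ℝ) {c : ℝ} (hc : 0 ≤ c) :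
    avg I (fun i => u i + c) ≤ avg I u + c := by
  rw [avg_add]
  rcases I.eq_empty_or_nonempty with h | h
  · simp [avg, h, hc]
  · rw [avg_const h]

lemma NN_mix {S : Y → Y} {ν : Measure Y} [IsProbabilityMeasure ν]
    (hS : MeasurePreserving S ν ν) (hmix : MeasureMixing S ν) (L : List (Finset ℕ)) :
    ∀ (g : Y → ℝ), BM g → ∀ ε : ℝ, 0 < ε → ∃ D : ℕ, ∀ a b : ℕ, a + D ≤ b ∨ b + D ≤ a →
      NN S ν L (fun y => g (S^[a] y) * g (S^[b] y)) ≤ NN S ν L g + ε := by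
  induction L with
  | nil =>
    intro g hg ε hε
    obtain ⟨D, hD⟩ := Metric.tendsto_atTop.1 (mixing_fn hS.measurable hmix hg) ε hε
    have key : ∀ a b, a + D ≤ b →
        |∫ y, g (S^[a] y) * g (S^[b] y) ∂ν| ≤ |∫ y, g y ∂ν| + ε := by
      intro a b hab
      have e : ∫ y, g (S^[a] y) * g (S^[b] y) ∂ν = ∫ y, g y * g (S^[b - a] y) ∂ν := by
        have h := integral_map (μ := ν) (hS.iterate a).measurable.aemeasurable
          (f := fun y => g y * g (S^[b - a] y))
          (hg.mul (hg.comp (hS.measurable.iterate _))).1.aestronglyMeasurable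
        rw [(hS.iterate a).map_eq] at h
        rw [h]
        congr 1; ext y
        rw [← Function.iterate_add_apply, Nat.sub_add_cancel (by omega)]
      have h1 := hD (b - a) (by omega)
      rw [Real.dist_eq] at h1
      rw [e]
      have h2 := hg.abs_integral_le ν
      have h3 : |(∫ y, g y ∂ν) ^ 2| ≤ |∫ y, g y ∂ν| := by
        rw [abs_pow, sq]
        exact mul_le_of_le_one_left (abs_nonneg _) h2
      have h4 := abs_sub_abs_le_abs_sub (∫ y, g y * g (S^[b - a] y) ∂ν) ((∫ y, g y ∂ν) ^ 2)
      linarith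
    refine ⟨D, fun a b hab => ?_⟩
    unfold NN
    rcases hab with h | h
    · exact key a b h
    · have := key b a h
      simp_rw [mul_comm (g (S^[a] _))]
      exact this
  | cons I L ih =>
    intro g hg ε hε
    have hgst : ∀ s t : ℕ, BM (fun y => g (S^[I.sup id - s] y) * g (S^[I.sup id - t] y)) :=
      fun s t => (hg.comp (hS.measurable.iterate _)).mul (hg.comp (hS.measurable.iterate _))
    choose Df hDf using fun s t => ih _ (hgst s t) (ε ^ 2) (by positivity)
    refine ⟨I.sup (fun s => I.sup (fun t => Df s t)), fun a b hab => ?_⟩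
    have hle : ∀ s ∈ I, ∀ t ∈ I, Df s t ≤ I.sup (fun s => I.sup (fun t => Df s t)) := by
      intro s hs t ht
      exact (Finset.le_sup (f := fun t => Df s t) ht).trans
        (Finset.le_sup (f := fun s => I.sup (fun t => Df s t)) hs)
    unfold NN
    set A := avg I (fun s => avg I (fun t =>
      NN S ν L (fun y => g (S^[I.sup id - s] y) * g (S^[I.sup id - t] y)))) with hA
    have hA0 : 0 ≤ A := avg_nonneg fun s _ => avg_nonneg fun t _ => NN_nonneg _ _ _ _
    have hle2 : avg I (fun s => avg I (fun t => NN S ν L (fun y =>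
        g (S^[a] (S^[I.sup id - s] y)) * g (S^[b] (S^[I.sup id - s] y)) *
        (g (S^[a] (S^[I.sup id - t] y)) * g (S^[b] (S^[I.sup id - t] y)))))) ≤ A + ε ^ 2 := by
      calc _ ≤ avg I (fun s => avg I (fun t =>
            NN S ν L (fun y => g (S^[I.sup id - s] y) * g (S^[I.sup id - t] y)) + ε ^ 2)) := by
            refine avg_mono fun s hs => avg_mono fun t ht => ?_
            have h := hDf s t a b (by have := hle s hs t ht; omega)
            refine le_trans (le_of_eq ?_) h
            congr 1
            ext y
            simp only [← Function.iterate_add_apply]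
            simp only [add_comm _ a, add_comm _ b]
            ring
        _ ≤ avg I (fun s => avg I (fun t =>
            NN S ν L (fun y => g (S^[I.sup id - s] y) * g (S^[I.sup id - t] y))) + ε ^ 2) :=
            avg_mono fun s _ => avg_add_const_le _ _ (by positivity)
        _ ≤ A + ε ^ 2 := avg_add_const_le _ _ (by positivity)
    refine Real.sqrt_le_iff.2 ⟨by positivity, hle2.trans ?_⟩
    have := Real.sq_sqrt hA0
    nlinarith [mul_nonneg (Real.sqrt_nonneg A) hε.le]

lemma exists_good {S : Y → Y} {ν : Measure Y} [IsProbabilityMeasure ν]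
    (hS : MeasurePreserving S ν ν) (hmix : MeasureMixing S ν) {k : ℕ → ℕ} (hk : StrictMono k)
    (L : List (Finset ℕ)) {g : Y → ℝ} (hg : BM g) {δ : ℝ} (hδ : 0 < δ)
    (hN : NN S ν L g < δ ^ 2) (J : ℕ) :
    ∃ I : Finset ℕ, I.Nonempty ∧ (∀ s ∈ I, ∃ j, J ≤ j ∧ k j = s) ∧ NN S ν (I :: L) g < δ := by
  set ε := (δ ^ 2 - NN S ν L g) / 3 with hε'
  have hε : 0 < ε := by rw [hε']; linarith
  obtain ⟨D, hD⟩ := NN_mix hS hmix L g hg ε hε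
  obtain ⟨M, hM⟩ := exists_nat_gt (1 / ε)
  have hM0 : (0:ℝ) < M := lt_trans (by positivity) hM
  have hMn : 0 < M := by exact_mod_cast hM0
  have hMe : (M:ℝ)⁻¹ < ε := by
    rw [inv_lt_comm₀ hM0 hε]; simpa using hM
  set κ : ℕ → ℕ := fun j => k (J + j * (D + 1)) with hκ
  have hgap : ∀ m n, k m + n ≤ k (m + n) := by
    intro m n
    induction n with
    | zero => simp
    | succ n ih =>
      have := hk (Nat.lt_succ_self (m + n))
      simp only [Nat.succ_eq_add_one] at this
      rw [← add_assoc m n 1]; omega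
  have hκ' : ∀ i j, i < j → κ i + D ≤ κ j := by
    intro i j hij
    obtain ⟨d, rfl⟩ := Nat.exists_eq_add_of_lt hij
    have := hgap (J + i * (D + 1)) ((d + 1) * (D + 1))
    have e : J + i * (D + 1) + (d + 1) * (D + 1) = J + (i + d + 1) * (D + 1) := by ring
    rw [e] at this
    have h2 : D ≤ (d + 1) * (D + 1) := by nlinarith
    simp only [hκ]
    omega
  have hinj : Function.Injective κ := by
    intro i j hij
    have := hk.injective hij
    have h2 : i * (D + 1) = j * (D + 1) := by omega
    exact Nat.eq_of_mul_eq_mul_right (Nat.succ_pos D) h2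
  set I := (Finset.range M).image κ with hI
  have hcard : I.card = M := by
    rw [hI, Finset.card_image_of_injective _ hinj, Finset.card_range]
  have hIne : I.Nonempty := Finset.card_pos.1 (by omega)
  refine ⟨I, hIne, ?_, ?_⟩
  · intro s hs
    simp only [hI, Finset.mem_image] at hs
    obtain ⟨i, _, rfl⟩ := hs
    exact ⟨_, Nat.le_add_right _ _, rfl⟩
  · unfold NN
    rw [Real.sqrt_lt' hδ]
    have hbd : ∀ s ∈ I, ∀ t ∈ I,
        NN S ν L (fun y => g (S^[I.sup id - s] y) * g (S^[I.sup id - t] y)) ≤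
        (NN S ν L g + ε) + (if s = t then 1 else 0) := by
      intro s hs t ht
      by_cases hst : s = t
      · rw [if_pos hst]
        have := NN_le_one (ν := ν) hS.measurable L _ ((hg.comp (hS.measurable.iterate (I.sup id - s))).mul
          (hg.comp (hS.measurable.iterate (I.sup id - t))))
        have := NN_nonneg S ν L g
        linarith
      · rw [if_neg hst, add_zero]
        apply hD
        have h1 : s ≤ I.sup id := Finset.le_sup (f := id) hs
        have h2 : t ≤ I.sup id := Finset.le_sup (f := id) ht
        have h3 : s + D ≤ t ∨ t + D ≤ s := by
          rw [hI, Finset.mem_image] at hs ht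
          obtain ⟨i, _, rfl⟩ := hs
          obtain ⟨j, _, rfl⟩ := ht
          rcases lt_trichotomy i j with h | h | h
          · exact Or.inl (hκ' _ _ h)
          · exact absurd (by rw [h]) hst
          · exact Or.inr (hκ' _ _ h)
        omega
    have hfin : avg I (fun s => avg I (fun t =>
        NN S ν L (fun y => g (S^[I.sup id - s] y) * g (S^[I.sup id - t] y)))) ≤
        (NN S ν L g + ε) + (M:ℝ)⁻¹ := by
      calc _ ≤ avg I (fun s => avg I (fun t => (NN S ν L g + ε) + (if s = t then 1 else 0))) :=
            avg_mono fun s hs => avg_mono fun t ht => hbd s hs t ht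
        _ = avg I (fun _ => (NN S ν L g + ε) + (M:ℝ)⁻¹) := by
            refine avg_congr fun s hs => ?_
            rw [avg_add, avg_const hIne]
            congr 1
            unfold avg
            rw [Finset.sum_ite_eq, if_pos hs, hcard, mul_one]
        _ = _ := avg_const hIne _
    have : NN S ν L g + ε + ε < δ ^ 2 := by
      have : δ ^ 2 = NN S ν L g + 3 * ε := by rw [hε']; ring
      linarith
    linarith

lemma DD_tendsto {T : X → X} {η : Measure (X × Y)} (hT : Measurable T) {k : ℕ → ℕ}
    {f φ : X → ℝ}
    (hw : ∀ w : X × Y → ℝ, BM w → Tendsto (fun j => ∫ p, f (T^[k j] p.1) * w p ∂η) atTop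
      (𝓝 (∫ p, φ p.1 * w p ∂η)))
    (L : List (Finset ℕ × (X → ℝ))) (hL : BL L) (w : X × Y → ℝ) (hwB : BM w) :
    Tendsto (fun j => DD T η L (fun p => f (T^[k j] p.1) * w p)) atTop
      (𝓝 (DD T η L (fun p => φ p.1 * w p))) := by
  induction L generalizing w with
  | nil => exact hw w hwB
  | cons q L ih =>
    have hq : BM q.2 := hL q (by simp)
    have hL' : BL L := fun r hr => hL r (by simp [hr])
    unfold DD avg
    refine Tendsto.const_mul _ (tendsto_finsetSum _ fun i _ => ?_)
    have := ih hL' (fun p => q.2 (T^[i] p.1) * w p)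
      ((hq.comp ((hT.iterate i).comp measurable_fst)).mul hwB)
    simp_rw [mul_left_comm (q.2 _)]
    exact this

lemma main_ind {T : X → X} {S : Y → Y} {η : Measure (X × Y)} [IsProbabilityMeasure η]
    {ν : Measure Y} [IsProbabilityMeasure ν]
    (hT : Measurable T) (hS : MeasurePreserving S ν ν)
    (hη : MeasurePreserving (Prod.map T S) η η)
    (hη2 : η.map Prod.snd = ν) (hmix : MeasureMixing S ν) {k : ℕ → ℕ} (hk : StrictMono k)
    {g : Y → ℝ} (hg : BM g) (rs : List ((X → ℝ) × (X → ℝ)))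
    (hrs : ∀ r ∈ rs, BM r.1 ∧ BM r.2 ∧ ∀ w : X × Y → ℝ, BM w →
      Tendsto (fun j => ∫ p, r.1 (T^[k j] p.1) * w p ∂η) atTop (𝓝 (∫ p, r.2 p.1 * w p ∂η))) :
    BM (fun p : X × Y => (rs.map (fun r => r.2 p.1)).prod * g p.2) ∧
    ∀ ε : ℝ, 0 < ε → ∃ δ : ℝ, 0 < δ ∧ ∀ L : List (Finset ℕ × (X → ℝ)), BL L →
      NN S ν (L.map Prod.fst) g < δ →
      |DD T η L (fun p => (rs.map (fun r => r.2 p.1)).prod * g p.2)| < ε := by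
  induction rs with
  | nil =>
    refine ⟨by simpa using hg.comp measurable_snd, fun ε hε => ⟨ε, hε, fun L hL hN => ?_⟩⟩
    simp only [List.map_nil, List.prod_nil, one_mul]
    exact (DD_le_NN hT hS.measurable hη hη2 _ L hL rfl g hg).trans_lt hN
  | cons r rs ih =>
    obtain ⟨hr1, hr2, hr3⟩ := hrs r (by simp)
    obtain ⟨hB, ih⟩ := ih (fun q hq => hrs q (by simp [hq]))
    simp only [List.map_cons, List.prod_cons, mul_assoc]
    refine ⟨(hr2.comp measurable_fst).mul hB, fun ε hε => ?_⟩
    obtain ⟨δ, hδ, h⟩ := ih (ε / 2) (by positivity)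
    refine ⟨δ ^ 2, by positivity, fun L hL hN => ?_⟩
    have ht := DD_tendsto hT hr3 L hL _ hB
    obtain ⟨J, hJ⟩ := Metric.tendsto_atTop.1 ht (ε / 2) (by positivity)
    obtain ⟨I, hIne, hI, hNI⟩ := exists_good hS hmix hk (L.map Prod.fst) hg hδ hN J
    have hL2 : BL ((I, r.1) :: L) := by
      intro q hq
      rcases List.mem_cons.1 hq with rfl | hq
      · exact hr1
      · exact hL q hq
    have h1 := h ((I, r.1) :: L) hL2 hNI
    set c := DD T η L (fun p => r.2 p.1 * ((rs.map (fun r => r.2 p.1)).prod * g p.2)) with hc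
    have h2 : |DD T η ((I, r.1) :: L) (fun p => (rs.map (fun r => r.2 p.1)).prod * g p.2) - c|
        ≤ ε / 2 := by
      unfold DD
      simp only
      nth_rewrite 1 [← avg_const hIne c]
      rw [← avg_sub]
      refine (abs_avg_le _ _).trans ?_
      calc _ ≤ avg I (fun _ => ε / 2) := avg_mono fun s hs => by
            obtain ⟨j, hj, rfl⟩ := hI s hs
            have := hJ j hj
            rw [Real.dist_eq] at this
            exact this.le
        _ = _ := avg_const hIne _
    rw [abs_lt] at h1 ⊢
    rw [abs_le] at h2
    constructor <;> linarith [h1.1, h1.2, h2.1, h2.2]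

lemma weak_lim {μ : Measure X} [IsProbabilityMeasure μ] {T : X → X}
    (hT : MeasurePreserving T μ μ) {k : ℕ → ℕ} {η : Measure (X × Y)} [IsProbabilityMeasure η]
    (hη1 : MeasurePreserving (Prod.fst : X × Y → X) η μ) (F H : Lp ℝ 2 μ)
    (hV : ∀ g : Lp ℝ 2 μ,
      Tendsto (fun j => ∫ x, F (T^[k j] x) * g x ∂μ) atTop (𝓝 (@inner ℝ _ _ H g)))
    (w : X × Y → ℝ) (hw : BM w) :
    Tendsto (fun j => ∫ p, F (T^[k j] p.1) * w p ∂η) atTop (𝓝 (∫ p, H p.1 * w p ∂η)) := by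
  let J : Lp ℝ 2 μ →L[ℝ] Lp ℝ 2 η :=
    (Lp.compMeasurePreservingₗᵢ ℝ (Prod.fst : X × Y → X) hη1).toContinuousLinearMap
  have hwL : MemLp w 2 η := MemLp.of_bound hw.1.aestronglyMeasurable 1
    (Eventually.of_forall fun z => hw.2 z)
  let W : Lp ℝ 2 η := hwL.toLp w
  have hJ : ∀ u : Lp ℝ 2 μ, @inner ℝ _ _ u (ContinuousLinearMap.adjoint J W)
      = ∫ p, u p.1 * w p ∂η := by
    intro u
    rw [ContinuousLinearMap.adjoint_inner_right, L2.inner_def]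
    refine integral_congr_ae ?_
    have h1 : (J u : X × Y → ℝ) =ᵐ[η] u ∘ Prod.fst := Lp.coeFn_compMeasurePreserving u hη1
    filter_upwards [h1, hwL.coeFn_toLp] with p h1 h2
    have h2' : (W : X × Y → ℝ) p = w p := h2
    rw [h1, h2']
    simp [mul_comm]
  have h := hV (ContinuousLinearMap.adjoint J W)
  rw [hJ] at h
  refine h.congr fun j => ?_
  have hTk := hT.iterate (k j)
  let u := Lp.compMeasurePreserving (E := ℝ) (p := 2) (T^[k j]) hTk F
  have hu : (u : X → ℝ) =ᵐ[μ] F ∘ T^[k j] := Lp.coeFn_compMeasurePreserving F hTk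
  have e1 : ∫ x, F (T^[k j] x) * (ContinuousLinearMap.adjoint J W) x ∂μ =
      @inner ℝ _ _ u (ContinuousLinearMap.adjoint J W) := by
    rw [L2.inner_def]
    refine integral_congr_ae ?_
    filter_upwards [hu] with x hx
    rw [hx]
    simp [mul_comm]
  rw [e1, hJ]
  refine integral_congr_ae ?_
  filter_upwards [hη1.quasiMeasurePreserving.ae hu] with p hp
  rw [hp]
  rfl

lemma bdd_lim {μ : Measure X} [IsProbabilityMeasure μ] {T : X → X}
    (hT : MeasurePreserving T μ μ) {k : ℕ → ℕ} (F H : Lp ℝ 2 μ)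
    (hF : ∀ᵐ x ∂μ, |F x| ≤ 1)
    (hV : ∀ g : Lp ℝ 2 μ,
      Tendsto (fun j => ∫ x, F (T^[k j] x) * g x ∂μ) atTop (𝓝 (@inner ℝ _ _ H g))) :
    ∀ᵐ x ∂μ, |H x| ≤ 1 := by
  have hHi : Integrable H μ := (Lp.memLp H).integrable (by norm_num)
  have hbd : ∀ s, MeasurableSet s → |∫ x in s, H x ∂μ| ≤ μ.real s := by
    intro s hs
    have h := hV (indicatorConstLp 2 hs (measure_ne_top μ s) (1:ℝ))
    rw [real_inner_comm, L2.inner_indicatorConstLp_one] at h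
    refine le_of_tendsto h.abs (Eventually.of_forall fun j => ?_)
    have e : ∫ x, F (T^[k j] x) * (indicatorConstLp 2 hs (measure_ne_top μ s) (1:ℝ)) x ∂μ =
        ∫ x in s, F (T^[k j] x) ∂μ := by
      rw [← integral_indicator hs]
      refine integral_congr_ae ?_
      filter_upwards [indicatorConstLp_coeFn (p := 2) (hs := hs) (hμs := measure_ne_top μ s)
        (c := (1:ℝ))] with x hx
      rw [hx]
      by_cases h : x ∈ s <;> simp [h]
    rw [e]
    have := norm_setIntegral_le_of_norm_le_const_ae' (μ := μ) (s := s)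
      (f := fun x => F (T^[k j] x)) (C := 1) (measure_lt_top μ s) (by
        filter_upwards [(hT.iterate (k j)).quasiMeasurePreserving.ae hF] with x hx _
        exact hx)
    simpa using this
  have h1 : H ≤ᵐ[μ] fun _ => (1:ℝ) := by
    refine ae_le_of_forall_setIntegral_le hHi (integrable_const _) fun s hs _ => ?_
    have := (abs_le.1 (hbd s hs)).2
    simpa using this
  have h2 : (fun _ => (-1:ℝ)) ≤ᵐ[μ] H := by
    refine ae_le_of_forall_setIntegral_le (integrable_const _) hHi fun s hs _ => ?_
    have := (abs_le.1 (hbd s hs)).1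
    simpa using this
  filter_upwards [h1, h2] with x h1 h2
  exact abs_le.2 ⟨h2, h1⟩

end main
end JoinAux

open JoinAux

/-- If `U_T^{k_j} → V` weakly on `L²(μ)`, `S` is mixing and `η` is a joining of
`(X, μ, T)` and `(Y, ν, S)`, then for bounded measurable `f₁, …, fₙ` on `X` and `g` on `Y`,
`∫ (∏ i (V fᵢ)(x)) g(y) dη = (∫ ∏ i (V fᵢ) dμ) (∫ g dν)`. -/
theorem joining_integral_prod_image_of_weakLimit
    {X Y : Type*} [MeasurableSpace X] [MeasurableSpace Y]
    (μ : Measure X) (ν : Measure Y) [IsProbabilityMeasure μ] [IsProbabilityMeasure ν]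
    (T : X ≃ᵐ X) (hT : MeasurePreserving T μ μ)
    (k : ℕ → ℕ) (hk : StrictMono k)
    (V : Lp ℝ 2 μ →L[ℝ] Lp ℝ 2 μ)
    (hV : ∀ f g : Lp ℝ 2 μ,
      Tendsto (fun j => ∫ x, f ((⇑T)^[k j] x) * g x ∂μ) atTop (𝓝 (@inner ℝ _ _ (V f) g)))
    (S : Y ≃ᵐ Y) (hS : MeasurePreserving S ν ν) (hSmix : MeasureMixing (⇑S) ν)
    (η : Measure (X × Y)) [IsProbabilityMeasure η]
    (hηinv : η.map (Prod.map ⇑T ⇑S) = η)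
    (hη1 : η.map Prod.fst = μ) (hη2 : η.map Prod.snd = ν)
    (n : ℕ) (hn : 1 ≤ n)
    (f : Fin n → X → ℝ) (hfm : ∀ i, Measurable (f i)) (hfb : ∀ i, ∃ C : ℝ, ∀ x, |f i x| ≤ C)
    (F : Fin n → Lp ℝ 2 μ) (hF : ∀ i, (F i : X → ℝ) =ᵐ[μ] f i)
    (g : Y → ℝ) (hgm : Measurable g) (hgb : ∃ C : ℝ, ∀ y, |g y| ≤ C) :
    ∫ p, (∏ i, (V (F i) : X → ℝ) p.1) * g p.2 ∂η
      = (∫ x, ∏ i, (V (F i) : X → ℝ) x ∂μ) * ∫ y, g y ∂ν := by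
  classical
  have hηT : MeasurePreserving (Prod.map (⇑T) (⇑S)) η η :=
    ⟨T.measurable.prodMap S.measurable, hηinv⟩
  have hfst : MeasurePreserving (Prod.fst : X × Y → X) η μ := ⟨measurable_fst, hη1⟩
  -- normalisation
  choose Cf hCf using hfb
  obtain ⟨Cg, hCg⟩ := hgb
  set c : ℝ := 1 + ∑ i, |Cf i| with hc
  have hc0 : 0 < c := by
    have : 0 ≤ ∑ i, |Cf i| := Finset.sum_nonneg fun i _ => abs_nonneg _
    linarith
  have hfc : ∀ i x, |f i x| ≤ c := by
    intro i x
    have h1 := Finset.single_le_sum (f := fun i => |Cf i|) (fun i _ => abs_nonneg _)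
      (Finset.mem_univ i)
    have h2 := hCf i x
    have h3 := le_abs_self (Cf i)
    linarith
  set m : ℝ := ∫ y, g y ∂ν with hm
  set b : ℝ := 1 + |Cg| + |m| with hb
  have hb0 : 0 < b := by positivity
  set g0 : Y → ℝ := fun y => b⁻¹ * (g y - m) with hg0
  have hg0B : BM g0 := by
    refine ⟨(hgm.sub_const _).const_mul _, fun y => ?_⟩
    rw [hg0]
    simp only
    rw [abs_mul, abs_of_pos (inv_pos.2 hb0), inv_mul_le_iff₀ hb0, mul_one]
    have h1 := abs_sub (g y) m
    have h2 := hCg y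
    have h3 := le_abs_self Cg
    linarith
  have hgi : Integrable g ν := Integrable.of_bound hgm.aestronglyMeasurable Cg
    (Eventually.of_forall fun y => hCg y)
  have hg0int : ∫ y, g0 y ∂ν = 0 := by
    rw [hg0, integral_const_mul, integral_sub hgi (integrable_const _)]
    simp [hm]
  -- rescaled functions
  set f' : Fin n → X → ℝ := fun i x => c⁻¹ * f i x with hf'
  have hf'B : ∀ i, BM (f' i) := by
    intro i
    refine ⟨(hfm i).const_mul _, fun x => ?_⟩
    rw [hf']
    simp only
    rw [abs_mul, abs_of_pos (inv_pos.2 hc0), inv_mul_le_iff₀ hc0, mul_one]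
    exact hfc i x
  set F' : Fin n → Lp ℝ 2 μ := fun i => c⁻¹ • F i with hF'
  have hF'f : ∀ i, (F' i : X → ℝ) =ᵐ[μ] f' i := by
    intro i
    filter_upwards [Lp.coeFn_smul c⁻¹ (F i), hF i] with x h1 h2
    rw [hF', hf']
    simp only
    rw [h1, Pi.smul_apply, h2, smul_eq_mul]
  have hVB : ∀ i, ∀ᵐ x ∂μ, |(V (F' i) : X → ℝ) x| ≤ 1 := fun i =>
    bdd_lim hT (F' i) (V (F' i)) (by
      filter_upwards [hF'f i] with x hx
      rw [hx]; exact (hf'B i).2 x) (hV (F' i))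
  set φ : Fin n → X → ℝ := fun i x => max (-1) (min 1 ((V (F' i) : X → ℝ) x)) with hφ
  have hφB : ∀ i, BM (φ i) := by
    intro i
    refine ⟨measurable_const.max (measurable_const.min (Lp.stronglyMeasurable _).measurable),
      fun x => ?_⟩
    rw [abs_le]
    exact ⟨le_max_left _ _, max_le (by norm_num) (min_le_left _ _)⟩
  have hφV : ∀ i, (V (F' i) : X → ℝ) =ᵐ[μ] φ i := by
    intro i
    filter_upwards [hVB i] with x hx
    rw [abs_le] at hx
    rw [hφ]
    simp only
    rw [min_eq_right hx.2, max_eq_right hx.1]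
  have hweak : ∀ i, ∀ w : X × Y → ℝ, BM w →
      Tendsto (fun j => ∫ p, f' i ((⇑T)^[k j] p.1) * w p ∂η) atTop
        (𝓝 (∫ p, φ i p.1 * w p ∂η)) := by
    intro i w hw
    have h := weak_lim hT hfst (F' i) (V (F' i)) (hV (F' i)) w hw
    have e : ∫ p, φ i p.1 * w p ∂η = ∫ p, (V (F' i) : X → ℝ) p.1 * w p ∂η := by
      refine integral_congr_ae ?_
      filter_upwards [hfst.quasiMeasurePreserving.ae (hφV i)] with p hp
      rw [hp]
    rw [e]
    refine h.congr fun j => integral_congr_ae ?_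
    filter_upwards [hfst.quasiMeasurePreserving.ae
      ((hT.iterate (k j)).quasiMeasurePreserving.ae (hF'f i))] with p hp
    rw [hp]
  have hmain := main_ind T.measurable hS hηT hη2 hSmix hk hg0B
    (List.ofFn (fun i => (f' i, φ i))) (by
      intro r hr
      obtain ⟨i, rfl⟩ := (List.mem_ofFn' _ _).1 hr
      exact ⟨hf'B i, hφB i, hweak i⟩)
  have hprod : ∀ x, ((List.ofFn (fun i => (f' i, φ i))).map
      (fun r : (X → ℝ) × (X → ℝ) => r.2 x)).prod = ∏ i, φ i x := by
    intro x
    rw [List.map_ofFn, List.prod_ofFn]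
    rfl
  simp only [hprod] at hmain
  have hzero : ∫ p, (∏ i, φ i p.1) * g0 p.2 ∂η = 0 := by
    by_contra hne
    obtain ⟨δ, hδ, h⟩ := hmain.2 _ (abs_pos.2 hne)
    have := h [] (by intro q hq; simp at hq) (by simpa [NN, hg0int] using hδ)
    exact lt_irrefl _ this
  have hVφ : ∀ᵐ x ∂μ, ∏ i, (V (F i) : X → ℝ) x = c ^ n * ∏ i, φ i x := by
    have h : ∀ i, ∀ᵐ x ∂μ, (V (F i) : X → ℝ) x = c * φ i x := by
      intro i
      have e : V (F' i) = c⁻¹ • V (F i) := by rw [hF']; exact map_smul V _ _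
      filter_upwards [hφV i, Lp.coeFn_smul c⁻¹ (V (F i))] with x h1 h2
      rw [← h1, e, h2, Pi.smul_apply, smul_eq_mul, mul_inv_cancel_left₀ hc0.ne']
    filter_upwards [ae_all_iff.2 h] with x hx
    rw [Finset.prod_congr rfl (fun i _ => hx i), Finset.prod_mul_distrib]
    simp
  have hPm : Measurable (fun x => ∏ i, φ i x) := Finset.measurable_prod _ fun i _ => (hφB i).1
  have hPB : BM (fun x => ∏ i, φ i x) := by
    refine ⟨hPm, fun x => ?_⟩
    rw [Finset.abs_prod]
    exact Finset.prod_le_one (fun i _ => abs_nonneg _) (fun i _ => (hφB i).2 x)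
  have e1 : ∫ p, (∏ i, (V (F i) : X → ℝ) p.1) * g p.2 ∂η =
      ∫ p, (c ^ n * b * ((∏ i, φ i p.1) * g0 p.2) + c ^ n * m * ∏ i, φ i p.1) ∂η := by
    refine integral_congr_ae ?_
    filter_upwards [hfst.quasiMeasurePreserving.ae hVφ] with p hp
    rw [hp, hg0]
    simp only
    field_simp
    ring
  have hi1 : Integrable (fun p : X × Y => ∏ i, φ i p.1) η :=
    (hPB.comp measurable_fst).integrable η
  have e2 : ∫ p : X × Y, ∏ i, φ i p.1 ∂η = ∫ x, ∏ i, φ i x ∂μ := by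
    rw [← hη1, integral_map measurable_fst.aemeasurable hPm.aestronglyMeasurable]
  rw [e1, integral_add ((hmain.1.integrable η).const_mul _) (hi1.const_mul _),
    integral_const_mul, integral_const_mul, hzero, e2, integral_congr_ae hVφ, integral_const_mul]
  ring
end

section
/- Let T be a measure-preserving automorphism of a probability space (X, μ), let S be a mixing measure-preserving automorphism of a probability space (Y, ν), and let η be a joining of (X, μ, T) and (Y, ν, S). Then for every f ∈ L²(μ) and every g ∈ L²(ν) with ∫_Y g dν = 0 one has ∫_{X×Y} f(T^n x) g(y) dη(x,y) → 0 as n → ∞. -/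
open MeasureTheory Filter Topology

/-- Closedness of the set of vectors on which a bounded family of functionals tends to zero. -/
lemma closed_tendsto_zero_aux {V : Type*} [NormedAddCommGroup V] (L : ℕ → V → ℝ) (C : ℝ)
    (hL : ∀ n v w, |L n v - L n w| ≤ C * ‖v - w‖) :
    IsClosed {v | Tendsto (fun n => L n v) atTop (𝓝 0)} := by
  rw [← isSeqClosed_iff_isClosed]
  intro u v hu huv
  simp only [Set.mem_ofPred_eq] at hu ⊢
  rw [Metric.tendsto_atTop]
  intro ε hε
  have h1 : Tendsto (fun k => C * ‖v - u k‖) atTop (𝓝 0) := by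
    have := ((tendsto_const_nhds (x := v)).sub huv).norm.const_mul C
    simpa using this
  obtain ⟨k, hk⟩ := (h1.eventually (gt_mem_nhds (half_pos hε))).exists
  obtain ⟨N, hN⟩ := Metric.tendsto_atTop.1 (hu k) (ε / 2) (half_pos hε)
  refine ⟨N, fun n hn => ?_⟩
  have h2 := hN n hn
  have h3 := hL n v (u k)
  rw [Real.dist_eq, sub_zero] at *
  have h4 : |L n v| ≤ |L n v - L n (u k)| + |L n (u k)| := by
    simpa using abs_add_le (L n v - L n (u k)) (L n (u k))
  linarith

/-- Mixing in terms of `L²` functions. -/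
lemma mixing_L2_aux {Y : Type*} [MeasurableSpace Y] (ν : Measure Y) [IsProbabilityMeasure ν]
    (S : Y → Y) (hS : MeasurePreserving S ν ν) (hmix : MeasureMixing S ν) (h g : Lp ℝ 2 ν) :
    Tendsto (fun n => inner ℝ h (Lp.compMeasurePreservingₗᵢ ℝ (S^[n]) (hS.iterate n) g)
      - inner ℝ h (indicatorConstLp 2 MeasurableSet.univ (measure_ne_top ν _) (1 : ℝ))
        * inner ℝ (indicatorConstLp 2 MeasurableSet.univ (measure_ne_top ν _) (1 : ℝ)) g)
      atTop (𝓝 0) := by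
  set e : Lp ℝ 2 ν := indicatorConstLp 2 MeasurableSet.univ (measure_ne_top ν _) (1 : ℝ) with he
  have bound : ∀ n (h g : Lp ℝ 2 ν),
      |inner ℝ h (Lp.compMeasurePreservingₗᵢ ℝ (S^[n]) (hS.iterate n) g)
        - inner ℝ h e * inner ℝ e g| ≤ (1 + ‖e‖ * ‖e‖) * ‖h‖ * ‖g‖ := by
    intro n h g
    have h1 := abs_real_inner_le_norm h (Lp.compMeasurePreservingₗᵢ ℝ (S^[n]) (hS.iterate n) g)
    rw [LinearIsometry.norm_map] at h1
    have h2 := abs_real_inner_le_norm h e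
    have h3 := abs_real_inner_le_norm e g
    have h4 := mul_le_mul h2 h3 (abs_nonneg _) (by positivity)
    rw [← abs_mul] at h4
    have h5 := abs_sub (inner ℝ h (Lp.compMeasurePreservingₗᵢ ℝ (S^[n]) (hS.iterate n) g))
      (inner ℝ h e * inner ℝ e g)
    linarith
  have ind : ∀ (A B : Set Y) (hA : MeasurableSet A) (hB : MeasurableSet B) (a b : ℝ),
      Tendsto (fun n => inner ℝ (indicatorConstLp 2 hA (measure_ne_top ν _) a)
        (Lp.compMeasurePreservingₗᵢ ℝ (S^[n]) (hS.iterate n)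
          (indicatorConstLp 2 hB (measure_ne_top ν _) b))
        - inner ℝ (indicatorConstLp 2 hA (measure_ne_top ν _) a) e
          * inner ℝ e (indicatorConstLp 2 hB (measure_ne_top ν _) b)) atTop (𝓝 0) := by
    intro A B hA hB a b
    have key : ∀ n, (Lp.compMeasurePreservingₗᵢ ℝ (S^[n]) (hS.iterate n)
          (indicatorConstLp 2 hB (measure_ne_top ν _) b) : Lp ℝ 2 ν)
          = indicatorConstLp 2 ((hS.iterate n).measurable hB) (measure_ne_top ν _) b := by
      intro n
      exact (Lp.indicatorConstLp_compMeasurePreserving hB (measure_ne_top ν _) b (hS.iterate n))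
    have inn : ∀ (A B : Set Y) (hA : MeasurableSet A) (hB : MeasurableSet B) (a b : ℝ),
        inner ℝ (indicatorConstLp 2 hA (measure_ne_top ν _) a : Lp ℝ 2 ν)
          (indicatorConstLp 2 hB (measure_ne_top ν _) b) = a * b * (ν (A ∩ B)).toReal := by
      intro A B hA hB a b
      rw [L2.inner_indicatorConstLp_eq_inner_setIntegral,
        setIntegral_congr_ae hA ((indicatorConstLp_coeFn (p := 2) (hs := hB)
          (hμs := measure_ne_top ν _) (c := b)).mono (fun x hx _ => hx)),
        setIntegral_indicator hB]
      simp [Measure.real]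
      ring
    simp only [key, he, inn, Set.inter_univ, Set.univ_inter]
    have h1 := (ENNReal.tendsto_toReal (by finiteness)).comp (hmix A B hA hB)
    have h2 := ((h1.const_mul (a * b)).sub_const
      (a * 1 * (ν A).toReal * (1 * b * (ν B).toReal)))
    have h3 : a * b * (ν A * ν B).toReal - a * 1 * (ν A).toReal * (1 * b * (ν B).toReal) = 0 := by
      rw [ENNReal.toReal_mul]; ring
    rw [h3] at h2
    exact h2
  have step : ∀ (A : Set Y) (hA : MeasurableSet A) (a : ℝ) (g : Lp ℝ 2 ν),
      Tendsto (fun n => inner ℝ (indicatorConstLp 2 hA (measure_ne_top ν _) a)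
        (Lp.compMeasurePreservingₗᵢ ℝ (S^[n]) (hS.iterate n) g)
        - inner ℝ (indicatorConstLp 2 hA (measure_ne_top ν _) a) e * inner ℝ e g)
        atTop (𝓝 0) := by
    intro A hA a g
    refine Lp.induction (p := 2) ENNReal.ofNat_ne_top _ ?_ ?_ ?_ g
    · intro c s hs hμs; exact ind _ _ hA hs a c
    · intro f' g' hf hg hd ih1 ih2
      have := ih1.add ih2
      simp only [map_add, inner_add_right, add_zero] at this ⊢
      refine this.congr fun n => ?_
      ring
    · refine closed_tendsto_zero_aux _
        ((1 + ‖e‖ * ‖e‖) * ‖(indicatorConstLp 2 hA (measure_ne_top ν _) a : Lp ℝ 2 ν)‖) ?_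
      intro n v w
      refine le_trans (le_of_eq ?_) (bound n _ _)
      rw [map_sub, inner_sub_right, inner_sub_right]
      congr 1
      ring
  refine Lp.induction (p := 2) ENNReal.ofNat_ne_top _ ?_ ?_ ?_ h
  · intro c s hs hμs; exact step _ hs c g
  · intro f' g' hf hg hd ih1 ih2
    have := ih1.add ih2
    simp only [inner_add_left, add_zero] at this ⊢
    refine this.congr fun n => ?_
    ring
  · refine closed_tendsto_zero_aux _ ((1 + ‖e‖ * ‖e‖) * ‖g‖) ?_
    intro n v w
    refine le_trans (le_of_eq ?_) ((bound n (v - w) g).trans (le_of_eq (by ring)))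
    rw [inner_sub_left, inner_sub_left]
    congr 1
    ring

/-- If `η` is a joining of `(X, μ, T)` with a mixing system `(Y, ν, S)`, then for
`f ∈ L²(μ)` and `g ∈ L²(ν)` with `∫ g dν = 0`, `∫ f(Tⁿ x) g(y) dη → 0`. -/
theorem joining_with_mixing_tendsto_zero
    {X Y : Type*} [MeasurableSpace X] [MeasurableSpace Y]
    (μ : Measure X) (ν : Measure Y) [IsProbabilityMeasure μ] [IsProbabilityMeasure ν]
    (T : X ≃ᵐ X) (hT : MeasurePreserving T μ μ)
    (S : Y ≃ᵐ Y) (hS : MeasurePreserving S ν ν) (hSmix : MeasureMixing (⇑S) ν)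
    (η : Measure (X × Y)) [IsProbabilityMeasure η]
    (hηinv : η.map (Prod.map ⇑T ⇑S) = η)
    (hη1 : η.map Prod.fst = μ) (hη2 : η.map Prod.snd = ν)
    (f : Lp ℝ 2 μ) (g : Lp ℝ 2 ν) (hg : ∫ y, g y ∂ν = 0) :
    Tendsto (fun n => ∫ p, f ((⇑T)^[n] p.1) * g p.2 ∂η) atTop (𝓝 0) := by
  have hS' : MeasurePreserving S.symm ν ν := hS.symm S
  have hfst : MeasurePreserving (Prod.fst : X × Y → X) η μ := ⟨measurable_fst, hη1⟩
  have hsnd : MeasurePreserving (Prod.snd : X × Y → Y) η ν := ⟨measurable_snd, hη2⟩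
  have hΦ : MeasurePreserving (Prod.map T S) η η :=
    ⟨T.measurable.prodMap S.measurable, hηinv⟩
  have hmix' : MeasureMixing S.symm ν := by
    intro A B hA hB
    have h1 := hSmix B A hB hA
    rw [mul_comm]
    refine h1.congr fun n => ?_
    rw [← (hS.iterate n).measure_preimage
      (hA.inter ((hS'.iterate n).measurable hB)).nullMeasurableSet]
    congr 1
    ext y
    have : (S.symm)^[n] (S^[n] y) = y :=
      (Function.LeftInverse.iterate S.symm_apply_apply n) y
    simp [this, and_comm]
  let JX := Lp.compMeasurePreservingₗᵢ ℝ (E := ℝ) (p := 2) Prod.fst hfst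
  let JY := Lp.compMeasurePreservingₗᵢ ℝ (E := ℝ) (p := 2) Prod.snd hsnd
  let h : Lp ℝ 2 ν := ContinuousLinearMap.adjoint JY.toContinuousLinearMap (JX f)
  have main := mixing_L2_aux ν S.symm hS' hmix' h g
  have hg0 : inner ℝ (indicatorConstLp 2 MeasurableSet.univ (measure_ne_top ν _) (1 : ℝ)) g
      = 0 := by
    rw [L2.inner_indicatorConstLp_one]
    simpa using hg
  simp only [hg0, mul_zero, sub_zero] at main
  refine main.congr fun n => ?_
  let W := Lp.compMeasurePreservingₗᵢ ℝ (E := ℝ) (p := 2) (S.symm^[n]) (hS'.iterate n)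
  let V := Lp.compMeasurePreservingₗᵢ ℝ (E := ℝ) (p := 2) ((Prod.map T S)^[n]) (hΦ.iterate n)
  change inner ℝ h (W g) = _
  have e1 : inner ℝ h (W g) = inner ℝ (JX f) (JY (W g)) :=
    ContinuousLinearMap.adjoint_inner_left JY.toContinuousLinearMap (W g) (JX f)
  rw [e1, ← V.inner_map_map, L2.inner_def]
  have a1 : (V (JX f) : X × Y → ℝ) =ᵐ[η] fun p => f (T^[n] p.1) := by
    have b1 := Lp.coeFn_compMeasurePreserving (JX f) (hΦ.iterate n)
    have b2 := (hΦ.iterate n).quasiMeasurePreserving.ae_eq_comp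
      (Lp.coeFn_compMeasurePreserving f hfst)
    refine b1.trans (b2.trans (Eventually.of_forall fun p => ?_))
    simp [Prod.map_iterate]
  have a2 : (V (JY (W g)) : X × Y → ℝ) =ᵐ[η] fun p => g p.2 := by
    have b1 := Lp.coeFn_compMeasurePreserving (JY (W g)) (hΦ.iterate n)
    have b2 := (hΦ.iterate n).quasiMeasurePreserving.ae_eq_comp
      (Lp.coeFn_compMeasurePreserving (W g) hsnd)
    have b3 := (hsnd.comp (hΦ.iterate n)).quasiMeasurePreserving.ae_eq_comp
      (Lp.coeFn_compMeasurePreserving g (hS'.iterate n))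
    refine b1.trans (b2.trans (b3.trans (Eventually.of_forall fun p => ?_)))
    have : (S.symm)^[n] (S^[n] p.2) = p.2 :=
      (Function.LeftInverse.iterate S.symm_apply_apply n) p.2
    simp [Prod.map_iterate, this]
  refine integral_congr_ae ?_
  filter_upwards [a1, a2] with p h1 h2
  rw [h1, h2]
  simp [mul_comm]
end

section
/- Let T be a measure-preserving automorphism of a probability space (X, μ), let (k_j) be a strictly increasing sequence of natural numbers such that the Koopman powers U_T^{k_j} converge weakly to a bounded operator V on L²(μ). Let S be a mixing measure-preserving automorphism of a probability space (Y, ν) and let η be a joining of (X, μ, T) and (Y, ν, S). Then for all f ∈ L²(μ) and g ∈ L²(ν) one has ∫_{X×Y} (V f)(x) g(y) dη(x,y) = (∫_X f dμ)(∫_Y g dν). -/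
open MeasureTheory Filter Topology

theorem isClosed_weak {E : Type*} [NormedAddCommGroup E] [InnerProductSpace ℝ E]
    (v : ℕ → E) (w : E) (C : ℝ) (hC : ∀ n, ‖v n‖ ≤ C) :
    IsClosed {h : E | Tendsto (fun n => @inner ℝ _ _ h (v n)) atTop (𝓝 (@inner ℝ _ _ h w))} := by
  rw [← closure_subset_iff_isClosed]
  intro h hh
  rw [Metric.mem_closure_iff] at hh
  simp only [Set.mem_ofPred_eq] at hh ⊢
  rw [Metric.tendsto_atTop]
  intro ε hε
  have hC0 : 0 ≤ C := (norm_nonneg _).trans (hC 0)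
  have hD : 0 < C + ‖w‖ + 1 := by positivity
  obtain ⟨b, hb, hd⟩ := hh (ε / 2 / (C + ‖w‖ + 1)) (by positivity)
  obtain ⟨N, hN⟩ := (Metric.tendsto_atTop.1 hb) (ε / 2) (by positivity)
  refine ⟨N, fun n hn => ?_⟩
  have h1 := hN n hn
  rw [Real.dist_eq] at h1 ⊢
  rw [dist_eq_norm, lt_div_iff₀ hD] at hd
  have e : @inner ℝ _ _ h (v n) - @inner ℝ _ _ h w =
      @inner ℝ _ _ (h - b) (v n - w) + (@inner ℝ _ _ b (v n) - @inner ℝ _ _ b w) := by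
    simp only [inner_sub_left, inner_sub_right]; ring
  have h2 : |@inner ℝ _ _ (h - b) (v n - w)| ≤ ‖h - b‖ * (C + ‖w‖ + 1) := by
    refine (abs_real_inner_le_norm _ _).trans ?_
    gcongr
    have := norm_sub_le (v n) w
    linarith [hC n]
  rw [e]
  refine (abs_add_le _ _).trans_lt ?_
  linarith

theorem weak_of_indicator {Y : Type*} [MeasurableSpace Y] (ν : Measure Y) [IsProbabilityMeasure ν]
    (v : ℕ → Lp ℝ 2 ν) (w : Lp ℝ 2 ν) (C : ℝ) (hC : ∀ n, ‖v n‖ ≤ C)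
    (H : ∀ (s : Set Y) (hs : MeasurableSet s), Tendsto (fun n => @inner ℝ _ _
      (indicatorConstLp 2 hs (measure_ne_top ν s) (1 : ℝ)) (v n)) atTop
      (𝓝 (@inner ℝ _ _ (indicatorConstLp 2 hs (measure_ne_top ν s) (1 : ℝ)) w)))
    (h : Lp ℝ 2 ν) :
    Tendsto (fun n => @inner ℝ _ _ h (v n)) atTop (𝓝 (@inner ℝ _ _ h w)) := by
  refine Lp.induction (by norm_num) (fun h : Lp ℝ 2 ν =>
    Tendsto (fun n => @inner ℝ _ _ h (v n)) atTop (𝓝 (@inner ℝ _ _ h w))) ?_ ?_ ?_ h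
  · intro c s hs hμs
    have e : ∀ z : Lp ℝ 2 ν, @inner ℝ _ _ (indicatorConstLp 2 hs hμs.ne c) z =
        c * @inner ℝ _ _ (indicatorConstLp 2 hs (measure_ne_top ν s) (1 : ℝ)) z := by
      intro z
      rw [L2.inner_indicatorConstLp_eq_inner_setIntegral,
        L2.inner_indicatorConstLp_eq_inner_setIntegral]
      simp [mul_comm]
    simp only [Lp.simpleFunc.coe_indicatorConst, e]
    exact (H s hs).const_mul c
  · intro f g hf hg _ h1 h2
    simp only [inner_add_left]
    exact h1.add h2
  · exact isClosed_weak v w C hC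

/-- The constant function one. -/
noncomputable def oneL2 {Y : Type*} [MeasurableSpace Y] (ν : Measure Y) [IsProbabilityMeasure ν] :
    Lp ℝ 2 ν := indicatorConstLp 2 MeasurableSet.univ (measure_ne_top ν _) (1 : ℝ)

theorem inner_oneL2 {Y : Type*} [MeasurableSpace Y] (ν : Measure Y) [IsProbabilityMeasure ν]
    (h : Lp ℝ 2 ν) : @inner ℝ _ _ (oneL2 ν) h = ∫ y, h y ∂ν := by
  rw [oneL2, L2.inner_indicatorConstLp_one, setIntegral_univ]

/-- Koopman isometry. -/
noncomputable abbrev koop {X Y : Type*} [MeasurableSpace X] [MeasurableSpace Y] {μ : Measure X}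
    {ν : Measure Y} (F : X → Y) (hF : MeasurePreserving F μ ν) : Lp ℝ 2 ν →ₗᵢ[ℝ] Lp ℝ 2 μ :=
  Lp.compMeasurePreservingₗᵢ ℝ F hF

theorem koop_coe {X Y : Type*} [MeasurableSpace X] [MeasurableSpace Y] {μ : Measure X}
    {ν : Measure Y} (F : X → Y) (hF : MeasurePreserving F μ ν) (g : Lp ℝ 2 ν) :
    koop F hF g =ᵐ[μ] fun x => g (F x) :=
  Lp.coeFn_compMeasurePreserving g hF

theorem koop_koop {X Y Z : Type*} [MeasurableSpace X] [MeasurableSpace Y] [MeasurableSpace Z]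
    {μ : Measure X} {ν : Measure Y} {ξ : Measure Z} (F : X → Y) (hF : MeasurePreserving F μ ν)
    (G : Y → Z) (hG : MeasurePreserving G ν ξ) (K : X → Z) (hK : MeasurePreserving K μ ξ)
    (h : G ∘ F = K) (g : Lp ℝ 2 ξ) : koop F hF (koop G hG g) = koop K hK g := by
  subst h
  exact (Lp.compMeasurePreserving_comp_apply g hG hF).symm

theorem koop_indicator {X Y : Type*} [MeasurableSpace X] [MeasurableSpace Y] {μ : Measure X}
    {ν : Measure Y} [IsProbabilityMeasure μ] [IsProbabilityMeasure ν]
    (F : X → Y) (hF : MeasurePreserving F μ ν) (s : Set Y) (hs : MeasurableSet s) :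
    koop F hF (indicatorConstLp 2 hs (measure_ne_top ν s) (1 : ℝ)) =
      indicatorConstLp 2 (hF.measurable hs) (measure_ne_top μ _) (1 : ℝ) := rfl

theorem koop_one {X Y : Type*} [MeasurableSpace X] [MeasurableSpace Y] {μ : Measure X}
    {ν : Measure Y} [IsProbabilityMeasure μ] [IsProbabilityMeasure ν]
    (F : X → Y) (hF : MeasurePreserving F μ ν) :
    koop F hF (oneL2 ν) = oneL2 μ := rfl

theorem mixing_L2 {Y : Type*} [MeasurableSpace Y] (ν : Measure Y) [IsProbabilityMeasure ν]
    (S : Y → Y) (hS : MeasurePreserving S ν ν) (hSmix : MeasureMixing S ν) (h g : Lp ℝ 2 ν) :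
    Tendsto (fun n => @inner ℝ _ _ (koop S^[n] (hS.iterate n) g) h) atTop
      (𝓝 ((∫ y, h y ∂ν) * ∫ y, g y ∂ν)) := by
  -- first, `g` an indicator
  have step1 : ∀ (B : Set Y) (hB : MeasurableSet B) (h : Lp ℝ 2 ν),
      Tendsto (fun n => @inner ℝ _ _ h (koop S^[n] (hS.iterate n)
        (indicatorConstLp 2 hB (measure_ne_top ν B) (1 : ℝ)))) atTop
      (𝓝 (@inner ℝ _ _ h (ν.real B • oneL2 ν))) := by
    intro B hB h
    refine weak_of_indicator ν _ _ ‖indicatorConstLp 2 hB (measure_ne_top ν B) (1 : ℝ)‖ ?_ ?_ h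
    · intro n
      exact (LinearIsometry.norm_map _ _).le
    · intro A hA
      simp only [koop_indicator, inner_smul_right, oneL2,
        L2.real_inner_indicatorConstLp_one_indicatorConstLp_one, Set.inter_univ]
      have := (ENNReal.tendsto_toReal (ENNReal.mul_ne_top (measure_ne_top ν A)
        (measure_ne_top ν B))).comp (hSmix A B hA hB)
      rw [ENNReal.toReal_mul, mul_comm] at this
      exact this
  have step2 := weak_of_indicator ν
    (fun n => ContinuousLinearMap.adjoint (koop S^[n] (hS.iterate n)).toContinuousLinearMap h)
    ((∫ y, h y ∂ν) • oneL2 ν) ‖h‖ ?_ ?_ g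
  · simp only [ContinuousLinearMap.adjoint_inner_right] at step2
    rw [inner_smul_right, real_inner_comm, inner_oneL2] at step2
    exact step2
  · intro n
    refine (ContinuousLinearMap.le_opNorm _ _).trans ?_
    rw [LinearIsometryEquiv.norm_map]
    exact mul_le_of_le_one_left (norm_nonneg _) (LinearIsometry.norm_toContinuousLinearMap_le _)
  · intro B hB
    simp only [ContinuousLinearMap.adjoint_inner_right]
    have := step1 B hB h
    rw [inner_smul_right, real_inner_comm, inner_oneL2] at this
    simp only [real_inner_comm _ h] at this ⊢
    rw [inner_smul_right, oneL2, L2.real_inner_indicatorConstLp_one_indicatorConstLp_one,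
      Set.inter_univ, mul_comm]
    simpa only [real_inner_comm, LinearIsometry.coe_toContinuousLinearMap] using this

/-- If `U_T^{k_j} → V` weakly on `L²(μ)`, `S` is mixing and `η` is a joining of
`(X, μ, T)` and `(Y, ν, S)`, then `∫ (V f)(x) g(y) dη = (∫ f dμ)(∫ g dν)`. -/
theorem joining_integral_image_of_weakLimit
    {X Y : Type*} [MeasurableSpace X] [MeasurableSpace Y]
    (μ : Measure X) (ν : Measure Y) [IsProbabilityMeasure μ] [IsProbabilityMeasure ν]
    (T : X ≃ᵐ X) (hT : MeasurePreserving T μ μ)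
    (k : ℕ → ℕ) (hk : StrictMono k)
    (V : Lp ℝ 2 μ →L[ℝ] Lp ℝ 2 μ)
    (hV : ∀ f g : Lp ℝ 2 μ,
      Tendsto (fun j => ∫ x, f ((⇑T)^[k j] x) * g x ∂μ) atTop (𝓝 (@inner ℝ _ _ (V f) g)))
    (S : Y ≃ᵐ Y) (hS : MeasurePreserving S ν ν) (hSmix : MeasureMixing (⇑S) ν)
    (η : Measure (X × Y)) [IsProbabilityMeasure η]
    (hηinv : η.map (Prod.map ⇑T ⇑S) = η)
    (hη1 : η.map Prod.fst = μ) (hη2 : η.map Prod.snd = ν)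
    (f : Lp ℝ 2 μ) (g : Lp ℝ 2 ν) :
    ∫ p, (V f : X → ℝ) p.1 * g p.2 ∂η = (∫ x, f x ∂μ) * ∫ y, g y ∂ν := by
  have p1 : MeasurePreserving (Prod.fst : X × Y → X) η μ := ⟨measurable_fst, hη1⟩
  have p2 : MeasurePreserving (Prod.snd : X × Y → Y) η ν := ⟨measurable_snd, hη2⟩
  have pW : MeasurePreserving (Prod.map ⇑T ⇑S) η η :=
    ⟨T.measurable.prodMap S.measurable, hηinv⟩
  have hR : MeasurePreserving S.symm ν ν := hS.symm S
  let J1 := koop Prod.fst p1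
  let J2 := koop Prod.snd p2
  let Q := ContinuousLinearMap.adjoint J2.toContinuousLinearMap (J1 f)
  let P := ContinuousLinearMap.adjoint J1.toContinuousLinearMap (J2 g)
  have key : ∀ n, ∫ x, f ((⇑T)^[n] x) * P x ∂μ =
      @inner ℝ _ _ (koop (⇑S)^[n] (hS.iterate n) Q) g := by
    intro n
    have e0 : ∫ x, f ((⇑T)^[n] x) * P x ∂μ =
        @inner ℝ _ _ (koop (⇑T)^[n] (hT.iterate n) f) P := by
      rw [L2.inner_def]
      refine integral_congr_ae ?_
      filter_upwards [koop_coe _ (hT.iterate n) f] with x hx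
      rw [hx]; exact mul_comm _ _
    have eR : koop (⇑S)^[n] (hS.iterate n) (koop (⇑S.symm)^[n] (hR.iterate n) g) = g := by
      rw [koop_koop _ _ _ _ id (MeasurePreserving.id ν)]
      · exact Lp.compMeasurePreserving_id_apply g
      · exact (Function.LeftInverse.iterate S.left_inv n).comp_eq_id
    have e1 : J1 (koop (⇑T)^[n] (hT.iterate n) f) =
        koop (Prod.map ⇑T ⇑S)^[n] (pW.iterate n) (J1 f) := by
      have hK := (hT.iterate n).comp p1
      rw [koop_koop _ _ _ _ _ hK rfl, koop_koop _ _ _ _ _ hK]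
      rw [Prod.map_iterate]; rfl
    have e2 : ∀ g', J2 (koop (⇑S)^[n] (hS.iterate n) g') =
        koop (Prod.map ⇑T ⇑S)^[n] (pW.iterate n) (J2 g') := by
      intro g'
      have hK := (hS.iterate n).comp p2
      rw [koop_koop _ _ _ _ _ hK rfl, koop_koop _ _ _ _ _ hK]
      rw [Prod.map_iterate]; rfl
    rw [e0]
    conv_rhs => rw [← eR]
    rw [LinearIsometry.inner_map_map, ContinuousLinearMap.adjoint_inner_right,
      ContinuousLinearMap.adjoint_inner_left]
    simp only [LinearIsometry.coe_toContinuousLinearMap]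
    rw [e1]
    conv_lhs => rw [← eR]
    rw [e2, LinearIsometry.inner_map_map]
  have lim1 := hV f P
  simp only [key] at lim1
  have lim2 := (mixing_L2 ν S hS hSmix g Q).comp hk.tendsto_atTop
  have h1 := tendsto_nhds_unique lim1 lim2
  have hQ : ∫ y, Q y ∂ν = ∫ x, f x ∂μ := by
    rw [← inner_oneL2, ← inner_oneL2, ContinuousLinearMap.adjoint_inner_right]
    simp only [LinearIsometry.coe_toContinuousLinearMap]
    rw [← LinearIsometry.inner_map_map J1, koop_one, koop_one]
  rw [hQ, mul_comm, ContinuousLinearMap.adjoint_inner_right] at h1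
  rw [← h1, L2.inner_def]
  refine integral_congr_ae ?_
  filter_upwards [koop_coe _ p1 (V f), koop_coe _ p2 g] with p hp1 hp2
  rw [← hp1, ← hp2]; exact mul_comm _ _
end

section
/- Let R be a measure-preserving map of a probability space (Z, m) and let S be a mixing measure-preserving automorphism of a probability space (Y, ν). Then for every F ∈ L²(m), every g ∈ L²(ν) with ∫_Y g dν = 0, and every H ∈ L²(m ⊗ ν), one has ∫_{Z×Y} F(R^n z) g(S^n y) H(z,y) d(m ⊗ ν)(z,y) → 0 as n → ∞; that is, the functions (z,y) ↦ F(R^n z) g(S^n y) converge weakly to 0 in L²(m ⊗ ν). -/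
open MeasureTheory Filter Topology

lemma wc_isClosed {E : Type*} [NormedAddCommGroup E] [NormedSpace ℝ E] (L : ℕ → E →L[ℝ] ℝ) (C : ℝ)
    (hL : ∀ n, ‖L n‖ ≤ C) : IsClosed {x : E | Tendsto (fun n => L n x) atTop (𝓝 0)} := by
  have hC : 0 ≤ C := (norm_nonneg _).trans (hL 0)
  rw [← isSeqClosed_iff_isClosed]
  intro u x hu hux
  simp only [Set.mem_setOf_eq] at hu ⊢
  rw [Metric.tendsto_atTop]
  intro ε hε
  obtain ⟨k, hk⟩ := (Metric.tendsto_atTop.1 hux) (ε / (2 * (C + 1))) (by positivity)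
  have hk := hk k le_rfl
  obtain ⟨N, hN⟩ := (Metric.tendsto_atTop.1 (hu k)) (ε / 2) (by positivity)
  refine ⟨N, fun n hn => ?_⟩
  have h1 := hN n hn
  rw [dist_zero_right] at h1 ⊢
  rw [dist_comm, dist_eq_norm] at hk
  have h2 : ‖L n (x - u k)‖ ≤ C * ‖x - u k‖ := (L n).le_of_opNorm_le (hL n) _
  have h3 : C * ‖x - u k‖ ≤ ε / 2 := by
    calc C * ‖x - u k‖ ≤ (C + 1) * (ε / (2 * (C + 1))) := by gcongr; linarith
      _ = ε / 2 := by field_simp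
  have h4 : L n x = L n (x - u k) + L n (u k) := by simp
  rw [h4]
  exact (norm_add_le _ _).trans_lt (by linarith)

lemma wc_dense {α : Type*} [MeasurableSpace α] (μ : Measure α) [IsFiniteMeasure μ]
    (L : ℕ → Lp ℝ 2 μ →L[ℝ] ℝ) (C : ℝ) (hL : ∀ n, ‖L n‖ ≤ C)
    (h : ∀ (s : Set α) (hs : MeasurableSet s),
      Tendsto (fun n => L n (indicatorConstLp 2 hs (measure_ne_top μ s) (1 : ℝ))) atTop (𝓝 0))
    (x : Lp ℝ 2 μ) : Tendsto (fun n => L n x) atTop (𝓝 0) := by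
  induction x using Lp.induction with
  | hp_ne_top => simp
  | indicatorConst c hs hμs =>
    rename_i s
    have h1 : (Lp.simpleFunc.indicatorConst 2 hs hμs.ne c : Lp ℝ 2 μ)
        = c • indicatorConstLp 2 hs (measure_ne_top μ s) (1 : ℝ) := by
      rw [Lp.simpleFunc.coe_indicatorConst]
      ext1
      filter_upwards [indicatorConstLp_coeFn (p := 2) (hs := hs) (hμs := hμs.ne) (c := c),
        indicatorConstLp_coeFn (p := 2) (hs := hs) (hμs := hμs.ne) (c := (1 : ℝ)),
        Lp.coeFn_smul c (indicatorConstLp 2 hs (measure_ne_top μ s) (1 : ℝ))] with y h1 h2 h3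
      rw [h1, h3, Pi.smul_apply, h2]
      by_cases hy : y ∈ s <;> simp [hy]
    rw [h1]
    simpa using (h s hs).const_mul c
  | add f g hd hf hg => simpa using hf.add hg
  | isClosed => exact wc_isClosed L C hL

lemma wc_mixing {Y : Type*} [MeasurableSpace Y] (ν : Measure Y) [IsProbabilityMeasure ν]
    (S : Y → Y) (hS : MeasurePreserving S ν ν) (hSmix : MeasureMixing S ν)
    (g : Lp ℝ 2 ν) (hg : ∫ y, g y ∂ν = 0) (B : Set Y) (hB : MeasurableSet B) :
    Tendsto (fun n => ∫ y in B, g (S^[n] y) ∂ν) atTop (𝓝 0) := by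
  let b : Lp ℝ 2 ν := indicatorConstLp 2 hB (measure_ne_top ν B) (1 : ℝ)
  let e : Lp ℝ 2 ν := indicatorConstLp 2 MeasurableSet.univ (measure_ne_top ν _) (1 : ℝ)
  let L : ℕ → Lp ℝ 2 ν →L[ℝ] ℝ := fun n =>
    (innerSL ℝ b).comp
      (Lp.compMeasurePreservingₗᵢ ℝ (S^[n]) (hS.iterate n)).toContinuousLinearMap
      - (ν.real B) • innerSL ℝ e
  have hLa : ∀ n f, L n f = (∫ y in B, f (S^[n] y) ∂ν) - ν.real B * ∫ y, f y ∂ν := by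
    intro n f
    have h1 : L n f = inner ℝ b (Lp.compMeasurePreserving (S^[n]) (hS.iterate n) f)
      - ν.real B * inner ℝ e f := rfl
    rw [h1, L2.inner_indicatorConstLp_one, L2.inner_indicatorConstLp_one, setIntegral_univ]
    congr 1
    exact integral_congr_ae (ae_restrict_of_ae (Lp.coeFn_compMeasurePreserving f (hS.iterate n)))
  have hmain := wc_dense ν L (‖b‖ + ‖(ν.real B) • innerSL ℝ e‖) ?_ ?_ g
  · simpa [hLa, hg] using hmain
  · intro n
    refine (norm_sub_le _ _).trans ?_
    gcongr
    refine ContinuousLinearMap.opNorm_le_bound _ (norm_nonneg _) fun f => ?_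
    refine (norm_inner_le_norm b (Lp.compMeasurePreserving (S^[n]) (hS.iterate n) f)).trans ?_
    rw [Lp.norm_compMeasurePreserving]
  · intro s hs
    have h1 : ∀ n, L n (indicatorConstLp 2 hs (measure_ne_top ν s) (1 : ℝ))
        = (ν (B ∩ S^[n] ⁻¹' s)).toReal - (ν B * ν s).toReal := by
      intro n
      have h2 : L n (indicatorConstLp 2 hs (measure_ne_top ν s) (1 : ℝ))
        = inner ℝ b (Lp.compMeasurePreserving (S^[n]) (hS.iterate n)
            (indicatorConstLp 2 hs (measure_ne_top ν s) (1 : ℝ)))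
          - ν.real B * inner ℝ e (indicatorConstLp 2 hs (measure_ne_top ν s) (1 : ℝ)) := rfl
      rw [h2, Lp.indicatorConstLp_compMeasurePreserving,
        L2.real_inner_indicatorConstLp_one_indicatorConstLp_one,
        L2.real_inner_indicatorConstLp_one_indicatorConstLp_one]
      simp [Measure.real]
    simp only [h1]
    have h3 := (ENNReal.tendsto_toReal (by finiteness)).comp (hSmix B s hB hs)
    simpa using h3.sub_const (ν B * ν s).toReal

/-- If `R` is measure-preserving on `(Z, m)` and `S` is a mixing automorphism of `(Y, ν)`,
then for `F ∈ L²(m)`, `g ∈ L²(ν)` with `∫ g dν = 0` and `H ∈ L²(m ⊗ ν)`, the functions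
`(z, y) ↦ F(Rⁿ z) g(Sⁿ y)` converge weakly to `0` in `L²(m ⊗ ν)`. -/
theorem weak_convergence_to_zero_of_mixing_factor
    {Z Y : Type*} [MeasurableSpace Z] [MeasurableSpace Y]
    (m : Measure Z) (ν : Measure Y) [IsProbabilityMeasure m] [IsProbabilityMeasure ν]
    (R : Z → Z) (hRm : Measurable R) (hR : MeasurePreserving R m m)
    (S : Y ≃ᵐ Y) (hS : MeasurePreserving S ν ν) (hSmix : MeasureMixing (⇑S) ν)
    (F : Lp ℝ 2 m) (g : Lp ℝ 2 ν) (hg : ∫ y, g y ∂ν = 0)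
    (H : Lp ℝ 2 (m.prod ν)) :
    Tendsto (fun n => ∫ p, F (R^[n] p.1) * g ((⇑S)^[n] p.2) * H p ∂(m.prod ν)) atTop (𝓝 0) := by
  have hint : MemLp (fun p : Z × Y => F p.1 * g p.2) 2 (m.prod ν) := by
    rw [memLp_two_iff_integrable_sq]
    · simp only [mul_pow]
      exact (Lp.memLp F).integrable_sq.mul_prod (Lp.memLp g).integrable_sq
    · exact (Lp.aestronglyMeasurable F).comp_fst.mul (Lp.aestronglyMeasurable g).comp_snd
  have hT : MeasurePreserving (Prod.map R S) (m.prod ν) (m.prod ν) := hR.prod hS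
  let G : Lp ℝ 2 (m.prod ν) := hint.toLp _
  let u : ℕ → Lp ℝ 2 (m.prod ν) := fun n =>
    Lp.compMeasurePreserving ((Prod.map R S)^[n]) (hT.iterate n) G
  have hu : ∀ n, u n =ᵐ[m.prod ν] fun p => F (R^[n] p.1) * g ((⇑S)^[n] p.2) := by
    intro n
    have h1 := Lp.coeFn_compMeasurePreserving G (hT.iterate n)
    have h2 := (hT.iterate n).quasiMeasurePreserving.ae_eq_comp hint.coeFn_toLp
    refine (h1.trans h2).trans (Eventually.of_forall fun p => ?_)
    simp [Prod.map_iterate]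
  let L : ℕ → Lp ℝ 2 (m.prod ν) →L[ℝ] ℝ := fun n => innerSL ℝ (u n)
  have hL : ∀ n, ‖L n‖ ≤ ‖G‖ := by
    intro n
    simp only [L, innerSL_apply_norm]
    exact (Lp.norm_compMeasurePreserving _ _).le
  have hLind : ∀ n (s : Set (Z × Y)) (hs : MeasurableSet s),
      L n (indicatorConstLp 2 hs (measure_ne_top (m.prod ν) s) (1 : ℝ))
        = ∫ p in s, u n p ∂(m.prod ν) := by
    intro n s hs
    rw [← L2.inner_indicatorConstLp_one hs (measure_ne_top (m.prod ν) s), real_inner_comm]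
    rfl
  have hui : ∀ n, Integrable (u n) (m.prod ν) := fun n =>
    (Lp.memLp (u n)).integrable (by norm_num)
  have hrect : ∀ (A : Set Z) (B : Set Y), MeasurableSet B →
      Tendsto (fun n => ∫ p in A ×ˢ B, u n p ∂(m.prod ν)) atTop (𝓝 0) := by
    intro A B hB
    have h1 : ∀ n, ∫ p in A ×ˢ B, u n p ∂(m.prod ν)
        = (∫ z in A, F (R^[n] z) ∂m) * ∫ y in B, g ((⇑S)^[n] y) ∂ν := by
      intro n
      rw [← setIntegral_prod_mul (fun z => F (R^[n] z)) (fun y => g ((⇑S)^[n] y))]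
      exact integral_congr_ae (ae_restrict_of_ae (hu n))
    simp only [h1]
    have h2 := wc_mixing ν S hS hSmix g hg B hB
    have hFi : Integrable F m := (Lp.memLp F).integrable (by norm_num)
    refine squeeze_zero_norm (a := fun n => (∫ z, ‖F z‖ ∂m) * ‖∫ y in B, g ((⇑S)^[n] y) ∂ν‖) ?_ ?_
    · intro n
      rw [norm_mul]
      gcongr
      have hFn : Integrable (fun z => F (R^[n] z)) m := (hR.iterate n).integrable_comp_of_integrable hFi
      calc ‖∫ z in A, F (R^[n] z) ∂m‖ ≤ ∫ z in A, ‖F (R^[n] z)‖ ∂m := norm_integral_le_integral_norm _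
        _ ≤ ∫ z, ‖F (R^[n] z)‖ ∂m :=
          setIntegral_le_integral hFn.norm (Eventually.of_forall fun _ => norm_nonneg _)
        _ = ∫ z, ‖F z‖ ∂m := by
          have h5 := integral_map (μ := m) (φ := R^[n]) (hR.iterate n).measurable.aemeasurable
            (f := fun z => ‖F z‖) (by
              rw [(hR.iterate n).map_eq]; exact hFi.norm.aestronglyMeasurable)
          rw [(hR.iterate n).map_eq] at h5
          exact h5.symm
    · simpa using h2.norm.const_mul (∫ z, ‖F z‖ ∂m)
  have hsets : ∀ (s : Set (Z × Y)), MeasurableSet s →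
      Tendsto (fun n => ∫ p in s, u n p ∂(m.prod ν)) atTop (𝓝 0) := by
    intro s hs
    induction s, hs using MeasurableSpace.induction_on_inter generateFrom_prod.symm isPiSystem_prod with
    | empty => simp
    | basic t ht =>
      obtain ⟨A, hA, B, hB, rfl⟩ := ht
      exact hrect A B hB
    | compl t ht ih =>
      have h1 := hrect Set.univ Set.univ MeasurableSet.univ
      rw [Set.univ_prod_univ] at h1
      simp only [setIntegral_univ] at h1
      have h2 : ∀ n, ∫ p in tᶜ, u n p ∂(m.prod ν)
          = ∫ p, u n p ∂(m.prod ν) - ∫ p in t, u n p ∂(m.prod ν) := by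
        intro n
        rw [← integral_add_compl ht (hui n)]; ring
      simp only [h2]
      simpa using h1.sub ih
    | iUnion f hd hf ih =>
      have hm : ∀ N : ℕ, MeasurableSet (⋃ i ∈ Finset.range N, f i) := fun N =>
        Finset.measurableSet_biUnion _ fun i _ => hf i
      have hcl := wc_isClosed L ‖G‖ hL
      have hlim : Tendsto (fun N : ℕ => indicatorConstLp 2 (hm N)
          (measure_ne_top (m.prod ν) _) (1 : ℝ)) atTop
          (𝓝 (indicatorConstLp 2 (MeasurableSet.iUnion hf)
            (measure_ne_top (m.prod ν) _) (1 : ℝ))) := by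
        refine tendsto_indicatorConstLp_set (by simp) ?_
        have h0 := tendsto_measure_biUnion_Ici_zero_of_pairwise_disjoint (μ := m.prod ν)
          (fun i => (hf i).nullMeasurableSet) hd
        refine tendsto_of_tendsto_of_tendsto_of_le_of_le tendsto_const_nhds h0
          (fun _ => zero_le) fun N => measure_mono ?_
        intro p hp
        rcases hp with ⟨h1, h2⟩ | ⟨h1, h2⟩
        · simp only [Set.mem_iUnion] at h1 h2
          obtain ⟨i, _, hi⟩ := h1
          exact absurd ⟨i, hi⟩ h2
        · simp only [Set.mem_iUnion, Finset.mem_range, not_exists] at h1 h2 ⊢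
          obtain ⟨i, hi⟩ := h1
          exact ⟨i, not_lt.1 fun h => h2 i h hi, hi⟩
      have hfin := hcl.mem_of_tendsto hlim (Eventually.of_forall fun N => ?_)
      · simpa only [Set.mem_setOf_eq, hLind] using hfin
      · simp only [Set.mem_setOf_eq, hLind]
        have h3 : ∀ n, ∫ p in ⋃ i ∈ Finset.range N, f i, u n p ∂(m.prod ν)
            = ∑ i ∈ Finset.range N, ∫ p in f i, u n p ∂(m.prod ν) := fun n =>
          integral_biUnion_finset _ (fun i _ => hf i) (fun i _ j _ hij => hd hij)
            fun i _ => (hui n).integrableOn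
        simp only [h3]
        simpa using tendsto_finsetSum (Finset.range N) fun i _ => ih i
  have hfinal := wc_dense (m.prod ν) L ‖G‖ hL (fun s hs => by simpa only [hLind] using hsets s hs) H
  refine hfinal.congr fun n => ?_
  have h1 : L n H = inner ℝ (u n) H := rfl
  rw [h1, L2.inner_def]
  refine integral_congr_ae ?_
  filter_upwards [hu n] with p hp
  rw [hp]
  simp [mul_comm]
end

section
/- Let T, R, S be measure-preserving automorphisms of probability spaces (X, μ), (Z, m), (Y, ν) respectively, with S mixing. Let ρ be a probability measure on X × Z × Y invariant under T × R × S, whose marginal on X is μ and whose marginal on Z × Y is the product measure m ⊗ ν. Let (k_j) be a strictly increasing sequence of natural numbers such that the Koopman powers U_T^{k_j} converge weakly to a bounded operator V on L²(μ). Then for every bounded measurable f : X → ℝ, every bounded measurable h : Z → ℝ, and every bounded measurable g : Y → ℝ with ∫_Y g dν = 0, one has ∫_{X×Z×Y} (V f)(x) h(z) g(y) dρ(x,z,y) = 0. -/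
open MeasureTheory Filter Topology

lemma aux_closed {E : Type*} [SeminormedAddCommGroup E] (φ : ℕ → E → ℝ) (C : ℝ)
    (hφ : ∀ n x y, |φ n x - φ n y| ≤ C * ‖x - y‖) :
    IsClosed {x | Tendsto (fun n => φ n x) atTop (𝓝 0)} := by
  rw [← isSeqClosed_iff_isClosed]
  intro x y hx hxy
  simp only [Set.mem_ofPred_eq, Metric.tendsto_atTop, Real.dist_eq, sub_zero] at hx ⊢
  intro ε hε
  have h1 : Tendsto (fun i => C * ‖y - x i‖) atTop (𝓝 (C * ‖y - y‖)) :=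
    ((tendsto_const_nhds.sub hxy).norm).const_mul C
  simp only [sub_self, norm_zero, mul_zero] at h1
  obtain ⟨i, hi⟩ := (h1.eventually (gt_mem_nhds (half_pos hε))).exists
  obtain ⟨N, hN⟩ := hx i (ε / 2) (half_pos hε)
  refine ⟨N, fun n hn => ?_⟩
  have h2 := hN n hn
  have h3 := hφ n y (x i)
  have h4 := abs_sub_abs_le_abs_sub (φ n y) (φ n (x i))
  linarith

/-- Orthogonality argument. -/
lemma aux_hilbert {E : Type*} [NormedAddCommGroup E] [InnerProductSpace ℝ E] [CompleteSpace E]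
    (W W' : E →ₗᵢ[ℝ] E) (hW : ∀ x, W (W' x) = x) (H : E)
    (hc : Tendsto (fun n => inner ℝ (W^[n] H) H) atTop (𝓝 0)) (G : E) :
    Tendsto (fun n => inner ℝ (W^[n] G) H) atTop (𝓝 0) := by
  have hWn : ∀ n x, W^[n] x = (W ^ n) x := fun n x => by
    rw [LinearIsometry.coe_pow]
  have hadj : ∀ n x y, inner ℝ (W^[n] x) y = inner ℝ x (W'^[n] y) := by
    intro n
    induction n with
    | zero => intro x y; rfl
    | succ n ih =>
      intro x y
      rw [Function.iterate_succ_apply, ih, Function.iterate_succ_apply']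
      conv_lhs => rw [← hW (W'^[n] y)]
      rw [LinearIsometry.inner_map_map]
  have hcancel : ∀ i x, W^[i] (W'^[i] x) = x := fun i x =>
    Function.LeftInverse.iterate (f := W') (g := W) hW i x
  let M : Submodule ℝ E :=
    { carrier := {x | Tendsto (fun n => inner ℝ (W^[n] x) H) atTop (𝓝 0)}
      add_mem' := by
        intro a b ha hb
        simp only [Set.mem_ofPred_eq, hWn, map_add, inner_add_left] at *
        simpa using ha.add hb
      zero_mem' := by simp [hWn]
      smul_mem' := by
        intro c x hx
        simp only [Set.mem_ofPred_eq, hWn, map_smul, inner_smul_left] at *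
        simpa using hx.const_mul c }
  have hMc : IsClosed (M : Set E) := by
    refine aux_closed (fun n x => inner ℝ (W^[n] x) H) ‖H‖ ?_
    intro n x y
    simp only [hWn, ← inner_sub_left, ← map_sub]
    refine (abs_real_inner_le_norm _ _).trans ?_
    rw [LinearIsometry.norm_map, mul_comm]
  have hM : ∀ i, W'^[i] H ∈ M := by
    intro i
    show Tendsto (fun n => inner ℝ (W^[n] (W'^[i] H)) H) atTop (𝓝 0)
    rw [← tendsto_add_atTop_iff_nat i]
    simpa only [Function.iterate_add_apply, hcancel] using hc
  have : CompleteSpace M := hMc.completeSpace_coe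
  obtain ⟨a, ha, b, hb, rfl⟩ := M.exists_add_mem_mem_orthogonal G
  refine M.add_mem ha ?_
  show Tendsto (fun n => inner ℝ (W^[n] b) H) atTop (𝓝 0)
  have : ∀ n, inner ℝ (W^[n] b) H = 0 := fun n => by
    rw [hadj]
    exact (Submodule.mem_orthogonal' M b).1 hb _ (hM n)
  simp [this]

lemma aux_iter {Ω : Type*} [MeasurableSpace Ω] (ρ : Measure Ω)
    (τ : Ω → Ω) (hτ : MeasurePreserving τ ρ ρ) (G : Lp ℝ 2 ρ) (n : ℕ) :
    (((Lp.compMeasurePreservingₗᵢ ℝ τ hτ)^[n] G : Lp ℝ 2 ρ) : Ω → ℝ) =ᵐ[ρ] G ∘ τ^[n] := by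
  induction n with
  | zero => rfl
  | succ n ih =>
    rw [Function.iterate_succ_apply']
    refine (Lp.coeFn_compMeasurePreserving _ hτ).trans ?_
    rw [Function.iterate_succ, ← Function.comp_assoc]
    exact hτ.quasiMeasurePreserving.ae_eq_comp ih

lemma aux_inner {Ω : Type*} [MeasurableSpace Ω] (ρ : Measure Ω) (F G : Lp ℝ 2 ρ)
    (a b : Ω → ℝ) (ha : F =ᵐ[ρ] a) (hb : G =ᵐ[ρ] b) :
    inner ℝ F G = ∫ p, a p * b p ∂ρ := by
  rw [L2.inner_def]
  apply integral_congr_ae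
  filter_upwards [ha, hb] with p h1 h2
  simp [h1, h2, mul_comm]

lemma aux_mix {Y : Type*} [MeasurableSpace Y] (ν : Measure Y) [IsProbabilityMeasure ν]
    (S : Y → Y) (hS : MeasurePreserving S ν ν)
    (hmix : ∀ A B : Set Y, MeasurableSet A → MeasurableSet B →
    Tendsto (fun n => ν (A ∩ S^[n] ⁻¹' B)) atTop (𝓝 (ν A * ν B)))
    (g : Y → ℝ) (hg : MemLp g 2 ν) (h0 : ∫ y, g y ∂ν = 0) :
    Tendsto (fun n => ∫ y, g (S^[n] y) * g y ∂ν) atTop (𝓝 0) := by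
  let U := Lp.compMeasurePreservingₗᵢ (E := ℝ) (p := 2) ℝ S hS
  let o : Lp ℝ 2 ν := indicatorConstLp 2 MeasurableSet.univ (measure_ne_top ν _) (1:ℝ)
  let φ : ℕ → Lp ℝ 2 ν → Lp ℝ 2 ν → ℝ := fun n a b =>
    inner ℝ (U^[n] a) b - inner ℝ a o * inner ℝ o b
  have hUn : ∀ n x, U^[n] x = (U ^ n) x := fun n x => by
    rw [LinearIsometry.coe_pow]
  have hb : ∀ n a b, |φ n a b| ≤ (1 + ‖o‖ * ‖o‖) * ‖a‖ * ‖b‖ := by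
    intro n a b
    have h1 := abs_real_inner_le_norm (U^[n] a) b
    rw [hUn, LinearIsometry.norm_map, ← hUn] at h1
    have h2 := abs_real_inner_le_norm a o
    have h3 := abs_real_inner_le_norm o b
    have h4 : |inner ℝ a o * inner ℝ o b| ≤ (‖a‖ * ‖o‖) * (‖o‖ * ‖b‖) := by
      rw [abs_mul]; gcongr
    have h5 := abs_sub (inner ℝ (U^[n] a) b) (inner ℝ a o * inner ℝ o b)
    simp only [φ]
    nlinarith
  have hadd1 : ∀ n a a' b, φ n (a + a') b = φ n a b + φ n a' b := by
    intro n a a' b; simp only [φ, hUn, map_add, inner_add_left]; ring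
  have hadd2 : ∀ n a b b', φ n a (b + b') = φ n a b + φ n a b' := by
    intro n a a' b; simp only [φ, inner_add_right]; ring
  have hsub1 : ∀ n a a' b, φ n a b - φ n a' b = φ n (a - a') b := by
    intro n a a' b; simp only [φ, hUn, map_sub, inner_sub_left]; ring
  have hsub2 : ∀ n a b b', φ n a b - φ n a b' = φ n a (b - b') := by
    intro n a a' b; simp only [φ, inner_sub_right]; ring
  have key : ∀ a b, Tendsto (fun n => φ n a b) atTop (𝓝 0) := by
    intro a b
    induction a using Lp.induction (p := 2) (_i := inferInstance) (hp_ne_top := ENNReal.ofNat_ne_top) with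
    | isClosed =>
      refine aux_closed (fun n a => φ n a b) ((1 + ‖o‖ * ‖o‖) * ‖b‖) ?_
      intro n x y
      simp only [hsub1]
      refine (hb _ _ _).trans (le_of_eq (by ring))
    | add _ _ _ h1 h2 =>
      simp only [hadd1]; simpa using h1.add h2
    | indicatorConst c hA hμA =>
      rename_i A
      induction b using Lp.induction (p := 2) (_i := inferInstance) (hp_ne_top := ENNReal.ofNat_ne_top) with
      | isClosed =>
        refine aux_closed (fun n b => φ n _ b) ((1 + ‖o‖ * ‖o‖) *
          ‖((Lp.simpleFunc.indicatorConst 2 hA hμA.ne c : Lp.simpleFunc ℝ 2 ν) : Lp ℝ 2 ν)‖) ?_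
        intro n x y
        simp only [hsub2]
        exact hb _ _ _
      | add _ _ _ h1 h2 =>
        simp only [hadd2]; simpa using h1.add h2
      | indicatorConst d hB hμB =>
        rename_i B
        rw [Lp.simpleFunc.coe_indicatorConst, Lp.simpleFunc.coe_indicatorConst]
        have e1 : ∀ (n : ℕ), φ n (indicatorConstLp 2 hA hμA.ne c)
            (indicatorConstLp 2 hB hμB.ne d) =
            c * d * (ν.real (B ∩ S^[n] ⁻¹' A) - ν.real B * ν.real A) := by
          intro n
          have q1 := aux_inner ν _ _ _ _ ((aux_iter ν S hS (indicatorConstLp 2 hA hμA.ne c) n).trans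
            ((hS.iterate n).quasiMeasurePreserving.ae_eq_comp
              (indicatorConstLp_coeFn (p := 2) (hs := hA) (hμs := hμA.ne) (c := c))))
              (indicatorConstLp_coeFn (p := 2) (hs := hB) (hμs := hμB.ne) (c := d))
          have q2 := aux_inner ν _ _ _ _
              (indicatorConstLp_coeFn (p := 2) (hs := hA) (hμs := hμA.ne) (c := c))
              (indicatorConstLp_coeFn (p := 2) (μ := ν) (hs := MeasurableSet.univ)
                (hμs := measure_ne_top ν _) (c := (1:ℝ)))
          have q3 := aux_inner ν _ _ _ _
              (indicatorConstLp_coeFn (p := 2) (μ := ν) (hs := MeasurableSet.univ)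
                (hμs := measure_ne_top ν _) (c := (1:ℝ)))
              (indicatorConstLp_coeFn (p := 2) (hs := hB) (hμs := hμB.ne) (c := d))
          have r1 : ∀ y, (A.indicator (fun _ => c) ∘ S^[n]) y * B.indicator (fun _ => d) y
              = (B ∩ S^[n] ⁻¹' A).indicator (fun _ => c * d) y := by
            intro y
            by_cases h1 : S^[n] y ∈ A <;> by_cases h2 : y ∈ B <;> simp [Set.indicator, h1, h2]
          simp only [r1] at q1
          rw [integral_indicator_const _ (hB.inter ((hS.iterate n).measurable hA))] at q1
          simp only [Set.indicator_univ, mul_one, one_mul] at q2 q3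
          rw [integral_indicator_const _ hA] at q2
          rw [integral_indicator_const _ hB] at q3
          simp only [φ, o, U]
          rw [q1, q2, q3]
          simp only [smul_eq_mul]; ring
        simp only [e1]
        have e2 := (ENNReal.tendsto_toReal (by finiteness)).comp (hmix B A hB hA)
        rw [ENNReal.toReal_mul] at e2
        have e3 := (e2.sub_const (ν.real B * ν.real A)).const_mul (c * d)
        simpa [Measure.real] using e3
  have hk := key (hg.toLp g) (hg.toLp g)
  refine hk.congr fun n => ?_
  have q1 := aux_inner ν _ _ _ _ ((aux_iter ν S hS (hg.toLp g) n).trans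
    ((hS.iterate n).quasiMeasurePreserving.ae_eq_comp hg.coeFn_toLp)) hg.coeFn_toLp
  have q2 := aux_inner ν _ _ _ _ hg.coeFn_toLp
     (indicatorConstLp_coeFn (p := 2) (μ := ν) (hs := MeasurableSet.univ)
                (hμs := measure_ne_top ν _) (c := (1:ℝ)))
  simp only [Set.indicator_univ, mul_one, h0] at q2
  simp only [φ, o, U]
  rw [q1, q2]
  simp

/-- Inductive step of the paper's argument: if `ρ` is a `(T × R × S)`-invariant coupling on
`X × Z × Y` whose `X`-marginal is `μ` and whose `(Z × Y)`-marginal is the product `m ⊗ ν`,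
`S` is mixing, and `U_T^{k_j} → V` weakly, then `∫ (V f)(x) h(z) g(y) dρ = 0` whenever
`f`, `h`, `g` are bounded measurable and `∫ g dν = 0`. -/
theorem coupling_integral_vanishes
    {X Z Y : Type*} [MeasurableSpace X] [MeasurableSpace Z] [MeasurableSpace Y]
    (μ : Measure X) (m : Measure Z) (ν : Measure Y)
    [IsProbabilityMeasure μ] [IsProbabilityMeasure m] [IsProbabilityMeasure ν]
    (T : X ≃ᵐ X) (hT : MeasurePreserving T μ μ)
    (R : Z ≃ᵐ Z) (hR : MeasurePreserving R m m)
    (S : Y ≃ᵐ Y) (hS : MeasurePreserving S ν ν) (hSmix : MeasureMixing (⇑S) ν)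
    (ρ : Measure (X × Z × Y)) [IsProbabilityMeasure ρ]
    (hρinv : ρ.map (Prod.map ⇑T (Prod.map ⇑R ⇑S)) = ρ)
    (hρ1 : ρ.map Prod.fst = μ) (hρ2 : ρ.map Prod.snd = m.prod ν)
    (k : ℕ → ℕ) (hk : StrictMono k)
    (V : Lp ℝ 2 μ →L[ℝ] Lp ℝ 2 μ)
    (hV : ∀ f g : Lp ℝ 2 μ,
      Tendsto (fun j => ∫ x, f ((⇑T)^[k j] x) * g x ∂μ) atTop (𝓝 (@inner ℝ _ _ (V f) g)))
    (f : X → ℝ) (hfm : Measurable f) (hfb : ∃ C : ℝ, ∀ x, |f x| ≤ C)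
    (F : Lp ℝ 2 μ) (hF : (F : X → ℝ) =ᵐ[μ] f)
    (h : Z → ℝ) (hhm : Measurable h) (hhb : ∃ C : ℝ, ∀ z, |h z| ≤ C)
    (g : Y → ℝ) (hgm : Measurable g) (hgb : ∃ C : ℝ, ∀ y, |g y| ≤ C)
    (hgint : ∫ y, g y ∂ν = 0) :
    ∫ p, (V F : X → ℝ) p.1 * h p.2.1 * g p.2.2 ∂ρ = 0 := by
  obtain ⟨Ch, hCh⟩ := hhb
  obtain ⟨Cg, hCg⟩ := hgb
  let τ : (X × Z × Y) ≃ᵐ (X × Z × Y) := T.prodCongr (R.prodCongr S)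
  have hτ : MeasurePreserving τ ρ ρ := ⟨τ.measurable, hρinv⟩
  have hτit : ∀ n p, τ^[n] p = (T^[n] p.1, R^[n] p.2.1, S^[n] p.2.2) := by
    intro n
    induction n with
    | zero => intro p; rfl
    | succ n ih => intro p; rw [Function.iterate_succ_apply, ih]; rfl
  have hfst : MeasurePreserving (Prod.fst : X × Z × Y → X) ρ μ := ⟨measurable_fst, hρ1⟩
  have hsnd : MeasurePreserving (Prod.snd : X × Z × Y → Z × Y) ρ (m.prod ν) :=
    ⟨measurable_snd, hρ2⟩
  have hgL : MemLp g 2 ν := MemLp.of_bound hgm.aestronglyMeasurable Cg (.of_forall hCg)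
  have hmixg := aux_mix ν S hS hSmix g hgL hgint
  let H0 : X × Z × Y → ℝ := fun p => h p.2.1 * g p.2.2
  have hH0 : MemLp H0 2 ρ := by
    refine MemLp.of_bound (by fun_prop) (Ch * Cg) (.of_forall fun p => ?_)
    simp only [H0, norm_mul, Real.norm_eq_abs]
    have := hCh p.2.1
    exact mul_le_mul this (hCg _) (abs_nonneg _) ((abs_nonneg _).trans this)
  let H := hH0.toLp H0
  let W := Lp.compMeasurePreservingₗᵢ (E := ℝ) (p := 2) ℝ τ hτ
  let W' := Lp.compMeasurePreservingₗᵢ (E := ℝ) (p := 2) ℝ τ.symm (hτ.symm τ)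
  have hWW : ∀ x, W (W' x) = x := by
    intro x
    apply Lp.ext
    refine (Lp.coeFn_compMeasurePreserving _ hτ).trans ?_
    refine (hτ.quasiMeasurePreserving.ae_eq_comp
      (Lp.coeFn_compMeasurePreserving x (hτ.symm τ))).trans ?_
    refine .of_forall fun p => ?_
    simp
  have hcorr : Tendsto (fun n => inner ℝ (W^[n] H) H) atTop (𝓝 0) := by
    have e : ∀ n, inner ℝ (W^[n] H) H =
        (∫ z, h (R^[n] z) * h z ∂m) * ∫ y, g (S^[n] y) * g y ∂ν := by
      intro n
      rw [aux_inner ρ _ _ _ _ ((aux_iter ρ τ hτ H n).trans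
        ((hτ.iterate n).quasiMeasurePreserving.ae_eq_comp hH0.coeFn_toLp)) hH0.coeFn_toLp]
      rw [← integral_prod_mul, ← hρ2, integral_map measurable_snd.aemeasurable]
      · refine integral_congr_ae (.of_forall fun p => ?_)
        simp only [Function.comp, hτit, H0]; ring
      · have := R.measurable.iterate n
        have := S.measurable.iterate n
        exact Measurable.aestronglyMeasurable (by fun_prop)
    simp only [e]
    refine bdd_le_mul_tendsto_zero' (Ch * Ch) (.of_forall fun n => ?_) hmixg
    have := norm_integral_le_of_norm_le_const (μ := m) (f := fun z => h (R^[n] z) * h z)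
      (C := Ch * Ch) (.of_forall fun z => by
        simp only [norm_mul, Real.norm_eq_abs]
        exact mul_le_mul (hCh _) (hCh _) (abs_nonneg _) ((abs_nonneg _).trans (hCh z)))
    simpa using this
  let J := Lp.compMeasurePreservingₗᵢ (E := ℝ) (p := 2) ℝ Prod.fst hfst
  have hlim := (aux_hilbert W W' hWW H hcorr (J F)).comp hk.tendsto_atTop
  let P : Lp ℝ 2 μ := (ContinuousLinearMap.adjoint J.toContinuousLinearMap) H
  have hP : ∀ Q : Lp ℝ 2 μ, inner ℝ Q P = inner ℝ (J Q) H := fun Q =>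
    ContinuousLinearMap.adjoint_inner_right J.toContinuousLinearMap Q H
  have hJ : ∀ Q : Lp ℝ 2 μ, J Q =ᵐ[ρ] Q ∘ Prod.fst := fun Q =>
    Lp.coeFn_compMeasurePreserving Q hfst
  have hVF := hV F P
  have e2 : ∀ n, ∫ x, F (T^[n] x) * P x ∂μ = inner ℝ (W^[n] (J F)) H := by
    intro n
    have a1 := aux_iter μ T hT F n
    have a2 := aux_inner μ _ P _ _ a1 (ae_eq_refl _)
    simp only [Function.comp] at a2
    rw [← a2, hP]
    congr 1
    apply Lp.ext
    refine (hJ _).trans ((hfst.quasiMeasurePreserving.ae_eq_comp a1).trans ?_)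
    refine EventuallyEq.trans ?_ ((aux_iter ρ τ hτ (J F) n).trans
      ((hτ.iterate n).quasiMeasurePreserving.ae_eq_comp (hJ F))).symm
    refine .of_forall fun p => ?_
    simp [Function.comp, hτit]
  simp only [e2] at hVF
  have e3 := tendsto_nhds_unique hVF hlim
  rw [hP, aux_inner ρ _ _ _ _ (hJ _) hH0.coeFn_toLp] at e3
  rw [← e3]
  refine integral_congr_ae (.of_forall fun p => ?_)
  simp [H0, mul_assoc]
end

section
/- Let T be a measure-preserving automorphism of a standard Borel probability space (X, μ), and let (k_j) be a strictly increasing sequence of natural numbers such that the Koopman powers U_T^{k_j} converge weakly to a bounded operator V on L²(μ). Then there exists a self-joining λ of (X, μ, T), i.e. a probability measure on X × X invariant under T × T with both marginals equal to μ, such that ∫_{X×X} f(x) g(x') dλ(x,x') = ∫_X (V f)(x) g(x) dμ(x) for all bounded measurable f, g : X → ℝ. (λ is the weak limit of the graph joinings of the powers T^{k_j}.) -/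
open MeasureTheory Filter Topology

/-- The graph joinings accumulate at some probability measure along an ultrafilter. -/
lemma exists_limit_aux {X : Type*} [TopologicalSpace X] [PolishSpace X] [MeasurableSpace X]
    [BorelSpace X] (μ : Measure X) [IsProbabilityMeasure μ]
    (S : ℕ → X → X) (hS : ∀ j, MeasurePreserving (S j) μ μ) :
    ∃ (U : Ultrafilter ℕ) (lam : ProbabilityMeasure (X × X)), (U : Filter ℕ) ≤ atTop ∧
      ∀ h : BoundedContinuousFunction (X × X) ℝ,
        Tendsto (fun j => ∫ x, h (S j x, x) ∂μ) U (𝓝 (∫ p, h p ∂(lam : Measure (X × X)))) := by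
  have hm : ∀ j, Measurable (fun x => (S j x, x)) := fun j => (hS j).measurable.prodMk measurable_id
  let ν : ℕ → ProbabilityMeasure (X × X) := fun j =>
    ⟨μ.map (fun x => (S j x, x)), Measure.isProbabilityMeasure_map (hm j).aemeasurable⟩
  have htight : IsTightMeasureSet
      {((m : ProbabilityMeasure (X × X)) : Measure (X × X)) | m ∈ Set.range ν} := by
    rw [isTightMeasureSet_iff_exists_isCompact_measure_compl_le]
    intro ε hε
    have h1 : IsTightMeasureSet {μ} := isTightMeasureSet_singleton
    rw [isTightMeasureSet_iff_exists_isCompact_measure_compl_le] at h1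
    obtain ⟨K, hK, hKε⟩ := h1 (ε / 2) (ENNReal.half_pos hε.ne')
    have hKε := hKε μ rfl
    refine ⟨K ×ˢ K, hK.prod hK, ?_⟩
    rintro _ ⟨_, ⟨j, rfl⟩, rfl⟩
    have hKm := hK.isClosed.measurableSet
    change μ.map (fun x => (S j x, x)) (K ×ˢ K)ᶜ ≤ ε
    rw [Measure.map_apply (hm j) (hKm.prod hKm).compl]
    have hsub : (fun x => (S j x, x)) ⁻¹' (K ×ˢ K)ᶜ ⊆ (S j ⁻¹' Kᶜ) ∪ Kᶜ := by
      intro x hx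
      simp only [Set.mem_preimage, Set.mem_compl_iff, Set.mem_prod, Set.mem_union] at hx ⊢
      tauto
    calc _ ≤ μ ((S j ⁻¹' Kᶜ) ∪ Kᶜ) := measure_mono hsub
      _ ≤ μ (S j ⁻¹' Kᶜ) + μ Kᶜ := measure_union_le _ _
      _ = μ Kᶜ + μ Kᶜ := by rw [(hS j).measure_preimage hKm.compl.nullMeasurableSet]
      _ ≤ ε / 2 + ε / 2 := add_le_add hKε hKε
      _ = ε := ENNReal.add_halves ε
  have hcomp := isCompact_closure_of_isTightMeasureSet htight
  let U : Ultrafilter ℕ := Ultrafilter.of atTop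
  obtain ⟨lam, -, hlam⟩ := hcomp.ultrafilter_le_nhds (U.map ν) (by
    simp only [le_principal_iff]
    refine Filter.mem_of_superset ?_ subset_closure
    exact Filter.mem_map.2 (Filter.univ_mem' fun j => ⟨j, rfl⟩))
  refine ⟨U, lam, Ultrafilter.of_le _, fun h => ?_⟩
  have ht : Tendsto ν U (𝓝 lam) := hlam
  have := (ProbabilityMeasure.tendsto_iff_forall_integral_tendsto.1 ht) h
  refine this.congr fun j => ?_
  change ∫ p, h p ∂(μ.map (fun x => (S j x, x))) = _
  rw [integral_map (hm j).aemeasurable h.continuous.measurable.aestronglyMeasurable]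

/-- If the Koopman powers `U_T^{k_j}` of an automorphism `T` of a standard Borel probability
space converge weakly to `V`, then there is a self-joining `λ` of `(X, μ, T)` (the weak limit
of the graph joinings of `T^{k_j}`) whose associated Markov operator is `V`:
`∫ f(x) g(x') dλ = ∫ (V f) g dμ` for bounded measurable `f`, `g`. -/
theorem exists_selfJoining_of_weakLimit
    {X : Type*} [MeasurableSpace X] [StandardBorelSpace X]
    (μ : Measure X) [IsProbabilityMeasure μ]
    (T : X ≃ᵐ X) (hT : MeasurePreserving T μ μ)
    (k : ℕ → ℕ) (hk : StrictMono k)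
    (V : Lp ℝ 2 μ →L[ℝ] Lp ℝ 2 μ)
    (hV : ∀ f g : Lp ℝ 2 μ,
      Tendsto (fun j => ∫ x, f ((⇑T)^[k j] x) * g x ∂μ) atTop (𝓝 (@inner ℝ _ _ (V f) g))) :
    ∃ lam : Measure (X × X), IsProbabilityMeasure lam ∧
      lam.map (Prod.map ⇑T ⇑T) = lam ∧
      lam.map Prod.fst = μ ∧ lam.map Prod.snd = μ ∧
      ∀ (f g : X → ℝ), Measurable f → (∃ C : ℝ, ∀ x, |f x| ≤ C) →
        Measurable g → (∃ C : ℝ, ∀ x, |g x| ≤ C) →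
        ∀ F : Lp ℝ 2 μ, (F : X → ℝ) =ᵐ[μ] f →
          ∫ p, f p.1 * g p.2 ∂lam = ∫ x, (V F : X → ℝ) x * g x ∂μ := by
  classical
  letI := upgradeStandardBorel X
  have hTk : ∀ j, MeasurePreserving ((⇑T)^[k j]) μ μ := fun j => hT.iterate (k j)
  obtain ⟨U, lam, hU, hlim⟩ := exists_limit_aux μ (fun j => (⇑T)^[k j]) hTk
  -- marginals
  have hfst : (lam : Measure (X × X)).map Prod.fst = μ := by
    have : IsProbabilityMeasure ((lam : Measure (X × X)).map Prod.fst) :=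
      Measure.isProbabilityMeasure_map measurable_fst.aemeasurable
    refine ext_of_forall_integral_eq_of_IsFiniteMeasure fun f => ?_
    rw [integral_map measurable_fst.aemeasurable f.continuous.measurable.aestronglyMeasurable]
    refine tendsto_nhds_unique (hlim (f.compContinuous ⟨Prod.fst, continuous_fst⟩)) ?_
    refine tendsto_const_nhds.congr fun j => ?_
    have := integral_map (μ := μ) (hTk j).measurable.aemeasurable
      (f := f) f.continuous.measurable.aestronglyMeasurable
    rw [(hTk j).map_eq] at this
    exact this
  have hsnd : (lam : Measure (X × X)).map Prod.snd = μ := by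
    have : IsProbabilityMeasure ((lam : Measure (X × X)).map Prod.snd) :=
      Measure.isProbabilityMeasure_map measurable_snd.aemeasurable
    refine ext_of_forall_integral_eq_of_IsFiniteMeasure fun f => ?_
    rw [integral_map measurable_snd.aemeasurable f.continuous.measurable.aestronglyMeasurable]
    refine tendsto_nhds_unique (hlim (f.compContinuous ⟨Prod.snd, continuous_snd⟩)) ?_
    exact tendsto_const_nhds.congr fun j => rfl
  have m1 : MeasurePreserving Prod.fst (lam : Measure (X × X)) μ := ⟨measurable_fst, hfst⟩
  have m2 : MeasurePreserving Prod.snd (lam : Measure (X × X)) μ := ⟨measurable_snd, hsnd⟩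
  -- inner products as integrals
  have hin : ∀ F G : Lp ℝ 2 μ, @inner ℝ _ _ (Lp.compMeasurePreserving Prod.fst m1 F)
      (Lp.compMeasurePreserving Prod.snd m2 G)
      = ∫ p, F p.1 * G p.2 ∂(lam : Measure (X × X)) := by
    intro F G
    rw [L2.inner_def]
    refine integral_congr_ae ?_
    filter_upwards [Lp.coeFn_compMeasurePreserving F m1, Lp.coeFn_compMeasurePreserving G m2]
      with p h1 h2
    rw [h1, h2]
    simp [mul_comm]
  have hswap : ∀ (F G : Lp ℝ 2 μ) (f g : X → ℝ), F =ᵐ[μ] f → G =ᵐ[μ] g →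
      ∀ j, ∫ x, F ((⇑T)^[k j] x) * G x ∂μ = ∫ x, f ((⇑T)^[k j] x) * g x ∂μ := by
    intro F G f g hF hG j
    refine integral_congr_ae ?_
    filter_upwards [(hTk j).quasiMeasurePreserving.ae_eq_comp hF, hG] with x h1 h2
    simp only [Function.comp_apply] at h1
    rw [h1, h2]
  have hswap2 : ∀ (F G : Lp ℝ 2 μ) (f g : X → ℝ), F =ᵐ[μ] f → G =ᵐ[μ] g →
      ∫ p, F p.1 * G p.2 ∂(lam : Measure (X × X)) = ∫ p, f p.1 * g p.2 ∂(lam : Measure (X × X)) := by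
    intro F G f g hF hG
    refine integral_congr_ae ?_
    filter_upwards [m1.quasiMeasurePreserving.ae_eq_comp hF,
      m2.quasiMeasurePreserving.ae_eq_comp hG] with p h1 h2
    simp only [Function.comp_apply] at h1 h2
    rw [h1, h2]
  -- the key identity, first for continuous functions
  have hcont : ∀ f g : BoundedContinuousFunction X ℝ,
      @inner ℝ _ _ (Lp.compMeasurePreserving Prod.fst m1 (BoundedContinuousFunction.toLp 2 μ ℝ f))
      (Lp.compMeasurePreserving Prod.snd m2 (BoundedContinuousFunction.toLp 2 μ ℝ g))
      = @inner ℝ _ _ (V (BoundedContinuousFunction.toLp 2 μ ℝ f))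
        (BoundedContinuousFunction.toLp 2 μ ℝ g) := by
    intro f g
    have hf := BoundedContinuousFunction.coeFn_toLp (p := 2) (𝕜 := ℝ) μ f
    have hg := BoundedContinuousFunction.coeFn_toLp (p := 2) (𝕜 := ℝ) μ g
    rw [hin, hswap2 _ _ _ _ hf hg]
    have h1 := hlim ((f.compContinuous ⟨Prod.fst, continuous_fst⟩) *
      (g.compContinuous ⟨Prod.snd, continuous_snd⟩))
    refine tendsto_nhds_unique h1 (((hV _ _).mono_left hU).congr fun j => ?_)
    rw [hswap _ _ _ _ hf hg]
    rfl
  have hdense : DenseRange (BoundedContinuousFunction.toLp 2 μ ℝ :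
      BoundedContinuousFunction X ℝ →L[ℝ] Lp ℝ 2 μ) :=
    BoundedContinuousFunction.toLp_denseRange ℝ μ ℝ (by simp)
  have c1 := (Lp.isometry_compMeasurePreserving (E := ℝ) (p := 2) m1).continuous
  have c2 := (Lp.isometry_compMeasurePreserving (E := ℝ) (p := 2) m2).continuous
  have key : ∀ F G : Lp ℝ 2 μ, @inner ℝ _ _ (Lp.compMeasurePreserving Prod.fst m1 F)
      (Lp.compMeasurePreserving Prod.snd m2 G) = @inner ℝ _ _ (V F) G := by
    intro F G
    refine hdense.induction_on (p := fun F => @inner ℝ _ _ (Lp.compMeasurePreserving Prod.fst m1 F)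
      (Lp.compMeasurePreserving Prod.snd m2 G) = @inner ℝ _ _ (V F) G) F
      (isClosed_eq (c1.inner continuous_const) (V.continuous.inner continuous_const)) fun f => ?_
    refine hdense.induction_on (p := fun G => @inner ℝ _ _ (Lp.compMeasurePreserving Prod.fst m1
      (BoundedContinuousFunction.toLp 2 μ ℝ f))
      (Lp.compMeasurePreserving Prod.snd m2 G) = @inner ℝ _ _
        (V (BoundedContinuousFunction.toLp 2 μ ℝ f)) G) G
      (isClosed_eq (continuous_const.inner c2) (continuous_const.inner continuous_id)) fun g => ?_
    exact hcont f g
  have hmem : ∀ g : X → ℝ, Measurable g → (∃ C : ℝ, ∀ x, |g x| ≤ C) → MemLp g 2 μ := by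
    rintro g hg ⟨C, hC⟩
    exact MemLp.of_bound hg.aestronglyMeasurable C (Eventually.of_forall hC)
  have hrect : ∀ A B : Set X, MeasurableSet A → MeasurableSet B →
      Tendsto (fun j => μ.real (((⇑T)^[k j]) ⁻¹' A ∩ B)) atTop
        (𝓝 ((lam : Measure (X × X)).real (A ×ˢ B))) := by
    intro A B hA hB
    have hb : ∀ A : Set X, ∃ C : ℝ, ∀ x, |A.indicator (fun _ => (1 : ℝ)) x| ≤ C := fun A =>
      ⟨1, fun x => by by_cases hx : x ∈ A <;> simp [hx]⟩
    have hfA := hmem _ (measurable_const.indicator hA) (hb A)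
    have hfB := hmem _ (measurable_const.indicator hB) (hb B)
    have h := hV (hfA.toLp _) (hfB.toLp _)
    rw [← key, hin, hswap2 _ _ _ _ hfA.coeFn_toLp hfB.coeFn_toLp] at h
    have e1 : ∫ p, A.indicator (fun _ => (1 : ℝ)) p.1 * B.indicator (fun _ => (1 : ℝ)) p.2
        ∂(lam : Measure (X × X)) = (lam : Measure (X × X)).real (A ×ˢ B) := by
      rw [← integral_indicator_one (hA.prod hB)]
      congr 1 with p
      by_cases h1 : p.1 ∈ A <;> by_cases h2 : p.2 ∈ B <;> simp [Set.indicator, h1, h2]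
    rw [e1] at h
    refine h.congr fun j => ?_
    rw [hswap _ _ _ _ hfA.coeFn_toLp hfB.coeFn_toLp,
      ← integral_indicator_one (((hTk j).measurable hA).inter hB)]
    congr 1 with x
    by_cases h1 : (⇑T)^[k j] x ∈ A <;> by_cases h2 : x ∈ B <;> simp [Set.indicator, h1, h2]
  refine ⟨lam, inferInstance, ?_, hfst, hsnd, ?_⟩
  · have hTT : Measurable (Prod.map ⇑T ⇑T) := T.measurable.prodMap T.measurable
    have : IsProbabilityMeasure ((lam : Measure (X × X)).map (Prod.map ⇑T ⇑T)) :=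
      Measure.isProbabilityMeasure_map hTT.aemeasurable
    refine Measure.ext_prod fun {A B} hA hB => ?_
    rw [Measure.map_apply hTT (hA.prod hB)]
    have hpre : Prod.map ⇑T ⇑T ⁻¹' (A ×ˢ B) = (⇑T ⁻¹' A) ×ˢ (⇑T ⁻¹' B) := rfl
    rw [hpre, ← measureReal_eq_measureReal_iff]
    refine tendsto_nhds_unique (hrect _ _ (T.measurable hA) (T.measurable hB)) ?_
    refine (hrect A B hA hB).congr fun j => ?_
    have hs : ((⇑T)^[k j]) ⁻¹' (⇑T ⁻¹' A) ∩ ⇑T ⁻¹' B = ⇑T ⁻¹' (((⇑T)^[k j]) ⁻¹' A ∩ B) := by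
      ext x
      simp only [Set.mem_inter_iff, Set.mem_preimage]
      rw [← Function.iterate_succ_apply' (⇑T), ← Function.iterate_succ_apply (⇑T)]
    rw [hs, measureReal_def, measureReal_def, hT.measure_preimage
      (((hTk j).measurable hA).inter hB).nullMeasurableSet]
  · intro f g hf hfb hg hgb F hF
    have hgm := hmem g hg hgb
    rw [← hswap2 F (hgm.toLp g) f g hF hgm.coeFn_toLp, ← hin, key, L2.inner_def]
    refine integral_congr_ae ?_
    filter_upwards [hgm.coeFn_toLp] with x hx
    rw [hx]
    simp [mul_comm]
end

section
/- Let (Y, ν) be a probability space, X a standard Borel space, and κ a Markov kernel from Y to X (so κ(y) is a probability measure on X for each y, measurably in y). Let λ_∞ be the probability measure on X^ℕ × Y defined by ∫ F dλ_∞ = ∫_Y (∫_{X^ℕ} F(x, y) d(⊗_{n∈ℕ} κ(y))(x)) dν(y) for every bounded measurable F : X^ℕ × Y → ℝ, where ⊗_{n∈ℕ} κ(y) is the infinite product of copies of κ(y). Then every bounded measurable F : X^ℕ × Y → ℝ that is symmetric in the X-coordinates — i.e. F(x ∘ σ, y) = F(x, y) for every permutation σ of ℕ moving only finitely many indices — is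 λ_∞-a.e. equal to a function of y alone: there exists a measurable G : Y → ℝ with F(x, y) = G(y) for λ_∞-a.e. (x, y). -/
open MeasureTheory Filter Topology ProbabilityTheory

open Set in
/-- Hewitt-Savage zero-one law for sets. -/
lemma hewitt_savage_set {X : Type*} [MeasurableSpace X] (μ : Measure X) [IsProbabilityMeasure μ]
    (A : Set (ℕ → X)) (hA : MeasurableSet A)
    (hsym : ∀ σ : Equiv.Perm ℕ, {i : ℕ | σ i ≠ i}.Finite → ∀ x : ℕ → X, x ∘ σ ∈ A ↔ x ∈ A) :
    (Measure.infinitePi (fun _ : ℕ => μ)).real A = 0 ∨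
      (Measure.infinitePi (fun _ : ℕ => μ)).real A = 1 := by
  classical
  set P := Measure.infinitePi (fun _ : ℕ => μ) with hP
  have key : ∀ ε : ℝ, 0 < ε → |P.real A - P.real A * P.real A| ≤ 4 * ε := by
    intro ε hε
    obtain ⟨B, hB, hlt⟩ := exists_measure_symmDiff_lt_of_generateFrom_isSetRing (μ := P)
      (C := measurableCylinders (fun _ : ℕ => X))
      ⟨empty_mem_measurableCylinders _, fun _ _ h1 h2 => union_mem_measurableCylinders h1 h2,
        fun _ _ h1 h2 => sdiff_mem_measurableCylinders h1 h2⟩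
      ⟨{univ}, countable_singleton _, by
        simpa using univ_mem_measurableCylinders (fun _ : ℕ => X), by simp⟩
      generateFrom_measurableCylinders.symm hA (ε := ENNReal.ofReal ε) (by simpa using hε)
    have hBm := MeasurableSet.of_mem_measurableCylinders hB
    obtain ⟨s, S, hS, rfl⟩ := (mem_measurableCylinders B).1 hB
    obtain ⟨N, hN⟩ : ∃ N, ∀ i ∈ s, i < N :=
      ⟨s.sup id + 1, fun i hi => Nat.lt_succ_of_le (Finset.le_sup (f := id) hi)⟩
    let g : ℕ → ℕ := fun i => if i < N then i + N else if i < 2 * N then i - N else i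
    have hg : Function.Involutive g := by
      intro i
      simp only [g]
      split_ifs <;> omega
    let σ : Equiv.Perm ℕ := hg.toPerm
    have hσ : ∀ i, σ i = g i := fun i => rfl
    have hσf : {i : ℕ | σ i ≠ i}.Finite := by
      refine (Set.finite_lt_nat (2 * N)).subset fun i hi => ?_
      simp only [mem_ofPred_eq, hσ, g] at hi ⊢
      by_contra h
      rw [if_neg (by omega), if_neg (by omega)] at hi
      exact hi rfl
    let φ : (ℕ → X) → (ℕ → X) := fun x i => x (σ i)
    have hφm : Measurable φ := by fun_prop
    have hφ : MeasurePreserving φ P P :=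
      ⟨hφm, Measure.map_infinitePi_infinitePi_of_inj (P := fun _ : ℕ => μ) σ.injective⟩
    have hφA : φ ⁻¹' A = A := by
      ext x; exact hsym σ hσf x
    set B : Set (ℕ → X) := cylinder (α := fun _ : ℕ => X) s S with hBdef
    have hindep : P.real (B ∩ φ ⁻¹' B) = P.real B * P.real B := by
      have hi : iIndepFun (fun (i : ℕ) (ω : ℕ → X) => ω i) P :=
        iIndepFun_infinitePi (P := fun _ : ℕ => μ) (X := fun _ x => x) (fun _ => measurable_id)
      have hd : Disjoint s (s.map σ.toEmbedding) := by
        rw [Finset.disjoint_left]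
        intro i hi hi'
        obtain ⟨j, hj, rfl⟩ := Finset.mem_map.1 hi'
        have h1 := hN j hj
        have h2 := hN _ hi
        simp only [Equiv.coe_toEmbedding, hσ, g, if_pos h1] at h2
        omega
      have h := hi.indepFun_finset s (s.map σ.toEmbedding) hd (fun i => measurable_pi_apply i)
      let ψ : ((i : (s.map σ.toEmbedding)) → X) → (s → X) :=
        fun z i => z ⟨σ i, Finset.mem_map_of_mem _ i.2⟩
      have hψ : Measurable ψ := by fun_prop
      have h2 := h.measure_inter_preimage_eq_mul S (ψ ⁻¹' S) hS (hψ hS)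
      have h3 : P (B ∩ φ ⁻¹' B) = P B * P (φ ⁻¹' B) := h2
      rw [hφ.measure_preimage hBm.nullMeasurableSet] at h3
      simp [measureReal_def, h3]
    have hd : P.real (symmDiff B A) < ε := by
      rw [measureReal_def]
      exact (ENNReal.toReal_lt_of_lt_ofReal hlt)
    have hd' : P.real (symmDiff (φ ⁻¹' B) A) < ε := by
      have : symmDiff (φ ⁻¹' B) A = φ ⁻¹' (symmDiff B A) := by
        conv_lhs => rw [← hφA]
        rfl
      rw [this, hφ.measureReal_preimage (hBm.symmDiff hA).nullMeasurableSet]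
      exact hd
    have e1 : P.real A ≤ P.real (B ∩ φ ⁻¹' B) + P.real (symmDiff B A)
        + P.real (symmDiff (φ ⁻¹' B) A) := by
      refine (measureReal_mono (s₂ := (B ∩ φ ⁻¹' B) ∪ (symmDiff B A) ∪ (symmDiff (φ ⁻¹' B) A))
        ?_).trans ((measureReal_union_le _ _).trans ?_)
      · intro x hx
        simp only [mem_union, mem_inter_iff, Set.mem_symmDiff]
        tauto
      · gcongr; exact measureReal_union_le _ _
    have e2 : P.real (B ∩ φ ⁻¹' B) ≤ P.real B := measureReal_mono inter_subset_left
    have e3 : P.real B ≤ P.real A + P.real (symmDiff B A) := by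
      refine (measureReal_mono (s₂ := A ∪ (symmDiff B A)) ?_).trans (measureReal_union_le _ _)
      intro x hx
      simp only [mem_union, Set.mem_symmDiff]
      tauto
    have e4 : P.real A ≤ P.real B + P.real (symmDiff B A) := by
      refine (measureReal_mono (s₂ := B ∪ (symmDiff B A)) ?_).trans (measureReal_union_le _ _)
      intro x hx
      simp only [mem_union, Set.mem_symmDiff]
      tauto
    have a0 : 0 ≤ P.real A := measureReal_nonneg
    have a1 : P.real A ≤ 1 := measureReal_le_one
    have b0 : 0 ≤ P.real B := measureReal_nonneg
    have b1 : P.real B ≤ 1 := measureReal_le_one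
    rw [hindep] at e1 e2
    rw [abs_le]
    constructor <;> nlinarith
  have h0 : P.real A - P.real A * P.real A = 0 := by
    by_contra h
    have hpos := abs_pos.2 h
    have := key (|P.real A - P.real A * P.real A| / 8) (by positivity)
    linarith
  have h1 : P.real A * (1 - P.real A) = 0 := by linarith
  rcases mul_eq_zero.1 h1 with h | h
  · exact Or.inl h
  · right; linarith

/-- Hewitt-Savage zero-one law for functions. -/
lemma hewitt_savage_fun {X : Type*} [MeasurableSpace X] (μ : Measure X) [IsProbabilityMeasure μ]
    (f : (ℕ → X) → ℝ) (hf : Measurable f)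
    (hsym : ∀ σ : Equiv.Perm ℕ, {i : ℕ | σ i ≠ i}.Finite → ∀ x : ℕ → X, f (x ∘ σ) = f x) :
    ∀ᵐ x ∂(Measure.infinitePi (fun _ : ℕ => μ)),
      f x = ∫ z, f z ∂(Measure.infinitePi (fun _ : ℕ => μ)) := by
  obtain ⟨a, ha⟩ := Filter.exists_eventuallyEq_const_of_forall_separating
    (l := ae (Measure.infinitePi (fun _ : ℕ => μ))) (f := f) MeasurableSet (by
      intro U hU
      rcases hewitt_savage_set μ (f ⁻¹' U) (hf hU) (fun σ hσ x => by
        simp only [Set.mem_preimage, hsym σ hσ x]) with h | h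
      · right
        rw [measureReal_eq_zero_iff] at h
        exact measure_eq_zero_iff_ae_notMem.1 h
      · left
        have h' : (Measure.infinitePi (fun _ : ℕ => μ)) (f ⁻¹' U) = 1 := by
          rw [measureReal_def] at h
          exact (ENNReal.toReal_eq_one_iff _).1 h
        exact (mem_ae_iff_prob_eq_one (hf hU)).2 h')
  have hI : ∫ z, f z ∂(Measure.infinitePi (fun _ : ℕ => μ)) = a := by
    rw [integral_congr_ae ha]; simp
  rw [hI]
  exact ha

lemma measurable_infinitePi_kernel {X Y : Type*} [MeasurableSpace X] [MeasurableSpace Y]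
    (κ : Kernel Y X) [IsMarkovKernel κ] :
    Measurable (fun y => Measure.infinitePi (fun _ : ℕ => κ y)) := by
  refine Measurable.measure_of_isPiSystem_of_isProbabilityMeasure
    generateFrom_squareCylinders.symm
    (isPiSystem_squareCylinders (fun _ => MeasurableSpace.isPiSystem_measurableSet) (by simp)) ?_
  rintro _ ⟨s, t, ht, rfl⟩
  have ht' : ∀ i, MeasurableSet (t i) := fun i => ht i (Set.mem_univ i)
  simp_rw [Measure.infinitePi_pi (fun y : ℕ => κ _) (fun i _ => ht' i)]
  exact Finset.measurable_prod _ fun i _ => κ.measurable_coe (ht' i)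

/-- Relative zero-one law: let `κ` be a Markov kernel from `Y` to a standard Borel space `X`
and let `λ∞` on `X^ℕ × Y` be the relatively independent infinite product
`∫ (⊗_{n ∈ ℕ} κ(y)) ⊗ δ_y dν(y)` (characterized here by its values on cylinder sets). Then
every bounded measurable function on `X^ℕ × Y` that is invariant under finitely supported
permutations of the `X`-coordinates is `λ∞`-a.e. equal to a function of the `Y`-coordinate. -/
theorem symmetric_function_ae_eq_function_of_y
    {X Y : Type*} [MeasurableSpace X] [StandardBorelSpace X] [MeasurableSpace Y]
    (ν : Measure Y) [IsProbabilityMeasure ν]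
    (κ : Kernel Y X) [IsMarkovKernel κ]
    (lam : Measure ((ℕ → X) × Y)) [IsProbabilityMeasure lam]
    (hlam : ∀ (s : Finset ℕ) (A : ℕ → Set X), (∀ i ∈ s, MeasurableSet (A i)) →
      ∀ B : Set Y, MeasurableSet B →
        lam ({x : ℕ → X | ∀ i ∈ s, x i ∈ A i} ×ˢ B) = ∫⁻ y in B, ∏ i ∈ s, κ y (A i) ∂ν)
    (F : (ℕ → X) × Y → ℝ) (hFm : Measurable F) (hFb : ∃ C : ℝ, ∀ p, |F p| ≤ C)
    (hFsym : ∀ σ : Equiv.Perm ℕ, {i : ℕ | σ i ≠ i}.Finite →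
      ∀ (x : ℕ → X) (y : Y), F (x ∘ σ, y) = F (x, y)) :
    ∃ G : Y → ℝ, Measurable G ∧ ∀ᵐ p ∂lam, F p = G p.2 := by
  let K : Kernel Y (ℕ → X) :=
    ⟨fun y => Measure.infinitePi (fun _ : ℕ => κ y), measurable_infinitePi_kernel κ⟩
  have hK : ∀ y, K y = Measure.infinitePi (fun _ : ℕ => κ y) := fun y => rfl
  have : IsMarkovKernel K := ⟨fun y => by rw [hK]; infer_instance⟩
  have hpiU : Set.univ ∈ squareCylinders (fun _ : ℕ => {s : Set X | MeasurableSet s}) :=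
    ⟨∅, fun _ => Set.univ, by simp, by simp⟩
  have hlamK : lam = (ν ⊗ₘ K).map Prod.swap := by
    refine ext_of_generate_finite
      (Set.image2 (· ×ˢ ·) (squareCylinders (fun _ : ℕ => {s : Set X | MeasurableSet s}))
        {t : Set Y | MeasurableSet t})
      (generateFrom_eq_prod generateFrom_squareCylinders MeasurableSpace.generateFrom_measurableSet
        ⟨fun _ => Set.univ, fun _ => hpiU, Set.iUnion_const _⟩
        isCountablySpanning_measurableSet).symm
      ((isPiSystem_squareCylinders (fun _ => MeasurableSpace.isPiSystem_measurableSet)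
        (by simp)).prod MeasurableSpace.isPiSystem_measurableSet) ?_ ?_
    · rintro _ ⟨_, ⟨s, t, ht, rfl⟩, B, hB, rfl⟩
      have ht' : ∀ i, MeasurableSet (t i) := fun i => ht i (Set.mem_univ i)
      have hm : MeasurableSet ((s : Set ℕ).pi t) :=
        MeasurableSet.pi s.countable_toSet (fun i _ => ht' i)
      have h1 := hlam s t (fun i _ => ht' i) B hB
      have h2 : {x : ℕ → X | ∀ i ∈ s, x i ∈ t i} = (s : Set ℕ).pi t := by
        ext x; simp [Set.mem_pi]
      rw [h2] at h1
      change lam ((s : Set ℕ).pi t ×ˢ B) = _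
      rw [h1, Measure.map_apply measurable_swap (hm.prod hB), Set.preimage_swap_prod,
        Measure.compProd_apply_prod hB hm]
      simp_rw [hK]
      refine lintegral_congr fun y => ?_
      rw [Measure.infinitePi_pi _ (fun i _ => ht' i)]
    · rw [Measure.map_apply measurable_swap MeasurableSet.univ]
      simp
  have hG : Measurable (fun y => ∫ x, F (x, y) ∂(K y)) :=
    (StronglyMeasurable.integral_kernel_prod_right' (κ := K) (f := fun p : Y × (ℕ → X) => F p.swap)
      (hFm.comp measurable_swap).stronglyMeasurable).measurable
  refine ⟨fun y => ∫ x, F (x, y) ∂(K y), hG, ?_⟩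
  have hms : MeasurableSet {p : (ℕ → X) × Y | F p = ∫ x, F (x, p.2) ∂(K p.2)} :=
    measurableSet_eq_fun hFm (hG.comp measurable_snd)
  rw [hlamK, ae_map_iff measurable_swap.aemeasurable hms]
  refine (Measure.ae_compProd_iff (measurable_swap hms)).2 ?_
  refine Filter.Eventually.of_forall fun y => ?_
  exact hewitt_savage_fun (κ y) (fun x => F (x, y)) (hFm.comp measurable_prodMk_right)
    (fun σ hσ x => hFsym σ hσ x y)
end
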